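/- arXiv:1701.05726 — 2 statements merged into one kernel-verified Lean document; each statement's English description precedes it below -/
import Mathlib

section
/- Let Ω be a domain (open connected set) in ℂ and let f : Ω → ℂ be a continuous, light, and open mapping. Then f is a discrete map, i.e. for every y ∈ ℂ the fiber f⁻¹({y}) is a discrete subset of Ω. -/
/-!
Write `Z` for the fibre over `y`. As `Z` is totally disconnected and locally compact, each of its
points has a small open neighbourhood `U` whose boundary misses `Z`; then `f` is proper and open
from `U` to a neighbourhood of `y`. Over a connected open set `V` near `y` every component of
`U ∩ f ⁻¹' V` is therefore mapped onto `V`, and by compactness of one fibre there are finitely many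
components. Take for `V` the two small discs `V₊` and `V₋` that touch the horizontal line through
`y` at `y` from above and from below. Each point of `U ∩ Z` lies in the closure `A` of a component
over `V₊` and in the closure `B` of a component over `V₋`, so `U ∩ Z` is finite as soon as every
such `A ∩ B` has at most one point.

Let `K` be the union of `A`, `B` and the bounded components `W` of the complement of `A ∪ B`. The
image of `W` is open, and its boundary lies in `f '' (A ∪ B)`, which meets the horizontal line only
at `y`. If `f '' W` met an open half of the line, it would contain it, against boundedness. Thus on
`K` the line is attained only in `Z`, and `{im f ≥ im y}` and `{im f ≤ im y}` cut `K` into two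
compact sets that meet in a totally disconnected set. By Janiszewski's theorem two points which are
connected within either of these sets are connected within their intersection, because the
complement of `K` is connected; hence they coincide.

Janiszewski's theorem rests on Eilenberg's criterion: if a compact set does not separate `p` from
`q`, then `(z - p) / (z - q)` has a continuous logarithm on it, whereas there is none on the
boundary of a bounded set containing `p` and staying away from `q`.
-/

namespace Stoilow

open Set Metric Topology

/-! ### Components, continua and frontiers -/

section Components

variable {X : Type*} [TopologicalSpace X]

theorem disjoint_frontier_connectedComponentIn [LocallyConnectedSpace X] {G : Set X}
    (hG : IsOpen G) (x : X) : Disjoint (frontier (connectedComponentIn G x)) G := by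
  rw [disjoint_left]
  intro z hz hzG
  have hz_notMem : z ∉ connectedComponentIn G x := by
    simpa only [hG.connectedComponentIn.interior_eq] using hz.2
  obtain ⟨w, hwz, hwx⟩ := mem_closure_iff.1 hz.1 _ hG.connectedComponentIn
    (mem_connectedComponentIn hzG)
  rw [connectedComponentIn_eq hwx, ← connectedComponentIn_eq hwz] at hz_notMem
  exact hz_notMem (mem_connectedComponentIn hzG)

theorem exists_isCompact_isPreconnected_between [LocallyPathConnectedSpace X]
    [LocallyCompactSpace X] [RegularSpace X] {M G : Set X} (hM : IsCompact M) (hG : IsOpen G)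
    (hGc : IsPreconnected G) (hMG : M ⊆ G) :
    ∃ N, IsCompact N ∧ IsPreconnected N ∧ M ⊆ N ∧ N ⊆ G := by
  rcases M.eq_empty_or_nonempty with rfl | ⟨e, heM⟩
  · exact ⟨∅, isCompact_empty, isPreconnected_empty, Subset.rfl, empty_subset G⟩
  have hpath : IsPathConnected G :=
    hG.isConnected_iff_isPathConnected.1 ⟨⟨e, hMG heM⟩, hGc⟩
  suffices h : ∃ N, IsCompact N ∧ IsPreconnected N ∧ M ⊆ N ∧ N ⊆ G ∧ e ∈ N by
    obtain ⟨N, hN, hNc, hMN, hNG, -⟩ := h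
    exact ⟨N, hN, hNc, hMN, hNG⟩
  refine hM.induction_on
    (p := fun M => ∃ N, IsCompact N ∧ IsPreconnected N ∧ M ⊆ N ∧ N ⊆ G ∧ e ∈ N)
    ⟨{e}, isCompact_singleton, isPreconnected_singleton, empty_subset _,
      singleton_subset_iff.2 (hMG heM), rfl⟩
    (fun s t hst ⟨N, hN, hNc, htN, h⟩ => ⟨N, hN, hNc, hst.trans htN, h⟩)
    (fun s t ⟨N, hN, hNc, hsN, hNG, heN⟩ ⟨P, hP, hPc, htP, hPG, heP⟩ =>
      ⟨N ∪ P, hN.union hP, hNc.union e heN heP hPc, union_subset_union hsN htP,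
        union_subset hNG hPG, Or.inl heN⟩)
    fun x hx => ?_
  obtain ⟨V, hV, hxV, hVG, hVc⟩ := exists_open_between_and_isCompact_closure isCompact_singleton hG
    (singleton_subset_iff.2 (hMG hx))
  rw [singleton_subset_iff] at hxV
  have hxC : x ∈ connectedComponentIn V x := mem_connectedComponentIn hxV
  have hCV : closure (connectedComponentIn V x) ⊆ closure V :=
    closure_mono (connectedComponentIn_subset V x)
  obtain ⟨γ, hγ⟩ := hpath.joinedIn e (hMG heM) x (hMG hx)
  refine ⟨connectedComponentIn V x,
    mem_nhdsWithin_of_mem_nhds (hV.connectedComponentIn.mem_nhds hxC),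
    range γ ∪ closure (connectedComponentIn V x),
    (isCompact_range γ.continuous).union (hVc.of_isClosed_subset isClosed_closure hCV),
    (isPreconnected_range γ.continuous).union x ⟨1, γ.target⟩ (subset_closure hxC)
      isPreconnected_connectedComponentIn.closure,
    subset_closure.trans subset_union_right,
    union_subset (range_subset_iff.2 hγ) (hCV.trans hVG), Or.inl ⟨0, γ.source⟩⟩

theorem exists_isOpen_frontier_disjoint [LocallyCompactSpace X] [T2Space X] {K V : Set X}
    (hK : IsCompact K) (hV : IsOpen V) {x : X} (hx : x ∈ K) (hxV : connectedComponentIn K x ⊆ V) :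
    ∃ U, IsOpen U ∧ x ∈ U ∧ closure U ⊆ V ∧ IsCompact (closure U) ∧ Disjoint (frontier U) K := by
  have : CompactSpace K := isCompact_iff_compactSpace.1 hK
  obtain ⟨Z, hZ, hxZ, hZV⟩ : ∃ Z : Set K, IsClopen Z ∧ ⟨x, hx⟩ ∈ Z ∧ (↑) '' Z ⊆ V := by
    rw [connectedComponentIn_eq_image hx, connectedComponent_eq_iInter_isClopen,
      image_subset_iff] at hxV
    have : Nonempty {s : Set K // IsClopen s ∧ ⟨x, hx⟩ ∈ s} :=
      ⟨⟨univ, isClopen_univ, mem_univ _⟩⟩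
    obtain ⟨⟨Z, hZ, hxZ⟩, hZV⟩ := exists_subset_nhds_of_isCompact
      (V := fun s : {s : Set K // IsClopen s ∧ ⟨x, hx⟩ ∈ s} => (s : Set K))
      (fun s t => ⟨⟨s ∩ t, s.2.1.inter t.2.1, s.2.2, t.2.2⟩, inter_subset_left,
        inter_subset_right⟩)
      (fun s => s.2.1.isClosed.isCompact)
      (fun z hz => (hV.preimage continuous_subtype_val).mem_nhds (hxV hz))
    exact ⟨Z, hZ, hxZ, image_subset_iff.2 hZV⟩
  have hZc : IsCompact (((↑) : K → X) '' Z) := hZ.isClosed.isCompact.image continuous_subtype_val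
  have hZc' : IsCompact (((↑) : K → X) '' Zᶜ) :=
    hZ.compl.isClosed.isCompact.image continuous_subtype_val
  have hdisj : Disjoint (((↑) : K → X) '' Z) ((↑) '' Zᶜ) :=
    (disjoint_image_iff Subtype.val_injective).2 disjoint_compl_right
  obtain ⟨U, hU, hZU, hUV, hUc⟩ := exists_open_between_and_isCompact_closure hZc
    (hV.sdiff hZc'.isClosed) (subset_sdiff.2 ⟨hZV, hdisj⟩)
  refine ⟨U, hU, hZU ⟨_, hxZ, rfl⟩, hUV.trans sdiff_subset, hUc, disjoint_left.2 fun z hz hzK => ?_⟩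
  by_cases hzZ : (⟨z, hzK⟩ : K) ∈ Z
  · exact hz.2 (hU.interior_eq.symm ▸ hZU ⟨_, hzZ, rfl⟩)
  · exact (hUV hz.1).2 ⟨_, hzZ, rfl⟩

theorem exists_isClosed_cover_of_isPreconnected_compl_union [LocallyPathConnectedSpace X]
    [LocallyCompactSpace X] [T2Space X] {A B S : Set X} (hA : IsCompact A) (hB : IsCompact B)
    (hAB : IsPreconnected (A ∪ B)ᶜ) (hS : IsCompact S) (hdisj : Disjoint S (A ∩ B)) :
    ∃ P Q, IsClosed P ∧ IsClosed Q ∧ S ⊆ P ∪ Q ∧ Disjoint A P ∧ Disjoint B Q ∧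
      IsPreconnected (P ∩ Q) := by
  obtain ⟨u, v, hu, hv, hAu, hBv, huv⟩ := SeparatedNhds.of_isCompact_isCompact
    (hS.inter hA) (hS.inter hB) (disjoint_left.2 fun z hzA hzB =>
      disjoint_left.1 hdisj hzA.1 ⟨hzA.2, hzB.2⟩)
  have hAS : Disjoint A (S \ u) := disjoint_left.2 fun z hzA hz => hz.2 (hAu ⟨hz.1, hzA⟩)
  have hBS : Disjoint B (S \ v) := disjoint_left.2 fun z hzB hz => hz.2 (hBv ⟨hz.1, hzB⟩)
  -- `S \ u` and `S \ v` cover `S`; a continuum containing their intersection is added to both.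
  obtain ⟨N, hN, hNc, hSN, hNAB⟩ := exists_isCompact_isPreconnected_between
    ((hS.diff hu).inter (hS.diff hv)) (hA.union hB).isClosed.isOpen_compl hAB
    fun z hz hzAB => hzAB.elim (fun h => disjoint_left.1 hAS h hz.1)
      (fun h => disjoint_left.1 hBS h hz.2)
  refine ⟨S \ u ∪ N, S \ v ∪ N, ((hS.diff hu).union hN).isClosed, ((hS.diff hv).union hN).isClosed,
    fun z hz => ?_, ?_, ?_, ?_⟩
  · by_cases hzu : z ∈ u
    · exact Or.inr (Or.inl ⟨hz, disjoint_left.1 huv hzu⟩)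
    · exact Or.inl (Or.inl ⟨hz, hzu⟩)
  · exact hAS.union_right (disjoint_left.2 fun z hzA hzN => hNAB hzN (Or.inl hzA))
  · exact hBS.union_right (disjoint_left.2 fun z hzB hzN => hNAB hzN (Or.inr hzB))
  · rwa [← inter_union_distrib_right, union_eq_right.2 hSN]

end Components

section Exterior

variable {E : Type*} [NormedAddCommGroup E] [NormedSpace ℝ E]

theorem isPreconnected_compl_ball (hE : 1 < Module.rank ℝ E) (c : E) {r : ℝ} (hr : 0 < r) :
    IsPreconnected (ball c r)ᶜ := by
  have himage : (fun v : ℝ × E => c + v.1 • v.2) '' (Ici r ×ˢ sphere 0 1) = (ball c r)ᶜ := by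
    ext z
    constructor
    · rintro ⟨⟨t, v⟩, ⟨ht, hv⟩, rfl⟩
      have ht : r ≤ t := ht
      simpa [norm_smul, mem_sphere_zero_iff_norm.1 hv, abs_of_pos (hr.trans_le ht)] using ht
    · intro hz
      have hz : r ≤ ‖z - c‖ := by simpa [dist_eq_norm] using hz
      have hpos : ‖z - c‖ ≠ 0 := (hr.trans_le hz).ne'
      refine ⟨(‖z - c‖, ‖z - c‖⁻¹ • (z - c)), ⟨hz, ?_⟩, ?_⟩
      · simp [norm_smul, hpos]
      · simp [smul_smul, hpos]
  rw [← himage]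
  exact (isPreconnected_Ici.prod (isPreconnected_sphere hE 0 1)).image _ (by fun_prop)

theorem exists_isCompact_isPreconnected_compl [ProperSpace E] (hE : 1 < Module.rank ℝ E)
    {J : Set E} (hJ : IsClosed J) {c : E} {r : ℝ} (hr : 0 < r) (hJr : J ⊆ ball c r) :
    ∃ K, IsCompact K ∧ J ⊆ K ∧ K ⊆ ball c r ∧ IsPreconnected Kᶜ ∧ IsOpen (K \ J) := by
  have : Nontrivial E := (rank_pos_iff_nontrivial (R := ℝ)).1 (zero_lt_one.trans hE)
  obtain ⟨e, he⟩ : (sphere c r).Nonempty := NormedSpace.sphere_nonempty.2 hr.le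
  have heb : e ∈ (ball c r)ᶜ := sphere_disjoint_ball.subset_compl_right he
  have hext : (ball c r)ᶜ ⊆ connectedComponentIn Jᶜ e :=
    (isPreconnected_compl_ball hE c hr).subset_connectedComponentIn heb (compl_subset_compl.2 hJr)
  have hopen : IsOpen (connectedComponentIn Jᶜ e) := hJ.isOpen_compl.connectedComponentIn
  refine ⟨(connectedComponentIn Jᶜ e)ᶜ, ?_, ?_, compl_subset_comm.1 hext, ?_, ?_⟩
  · exact (isCompact_closedBall c r).of_isClosed_subset hopen.isClosed_compl
      ((compl_subset_comm.1 hext).trans ball_subset_closedBall)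
  · exact subset_compl_comm.1 (connectedComponentIn_subset Jᶜ e)
  · rw [compl_compl]
    exact isPreconnected_connectedComponentIn
  · have hdiff : (connectedComponentIn Jᶜ e)ᶜ \ J = Jᶜ \ closure (connectedComponentIn Jᶜ e) := by
      ext z
      have hz := @disjoint_left.1 (disjoint_frontier_connectedComponentIn hJ.isOpen_compl e) z
      rw [closure_eq_self_union_frontier]
      simp only [mem_sdiff, mem_compl_iff, mem_union] at hz ⊢
      tauto
    rw [hdiff]
    exact hJ.isOpen_compl.sdiff isClosed_closure

end Exterior

/-! ### Continuous logarithms -/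

section Logarithm

variable {X : Type*} [TopologicalSpace X]

/-- The function `f` has a continuous logarithm on `s`; in particular it has no zero there. -/
def HasLogOn (f : X → ℂ) (s : Set X) : Prop :=
  ∃ g : X → ℂ, ContinuousOn g s ∧ EqOn (Complex.exp ∘ g) f s

theorem eq_of_forall_exp_eq {s : Set X} (hs : IsPreconnected s) {g : X → ℂ} (hg : ContinuousOn g s)
    {c : ℂ} (hc : ∀ x ∈ s, Complex.exp (g x) = c) {x y : X} (hx : x ∈ s) (hy : y ∈ s) : g x = g y :=
  Complex.isCoveringMap_exp.constOn_of_comp hs hg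
    (fun a ha b hb => Subtype.ext ((hc a ha).trans (hc b hb).symm)) hx hy

theorem HasLogOn.mono {f : X → ℂ} {s t : Set X} (h : HasLogOn f t) (hst : s ⊆ t) : HasLogOn f s :=
  let ⟨g, hg, hgf⟩ := h
  ⟨g, hg.mono hst, hgf.mono hst⟩

theorem HasLogOn.union {f : X → ℂ} {s t : Set X} (hs : IsClosed s) (ht : IsClosed t)
    (hst : IsPreconnected (s ∩ t)) (hfs : HasLogOn f s) (hft : HasLogOn f t) :
    HasLogOn f (s ∪ t) := by
  obtain ⟨g, hg, hgf⟩ := hfs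
  obtain ⟨h, hh, hhf⟩ := hft
  have hexp : ∀ x ∈ s ∩ t, Complex.exp (g x - h x) = 1 := fun x hx => by
    rw [Complex.exp_sub, div_eq_one_iff_eq (Complex.exp_ne_zero _)]
    exact (hgf hx.1).trans (hhf hx.2).symm
  obtain ⟨k, hk, hgh⟩ : ∃ k, Complex.exp k = 1 ∧ ∀ x ∈ s ∩ t, g x = h x + k := by
    rcases (s ∩ t).eq_empty_or_nonempty with hempty | ⟨x₀, hx₀⟩
    · exact ⟨0, Complex.exp_zero, by simp [hempty]⟩
    · refine ⟨g x₀ - h x₀, hexp x₀ hx₀, fun x hx => ?_⟩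
      have hconst : g x - h x = g x₀ - h x₀ := eq_of_forall_exp_eq (g := fun x => g x - h x) hst
        ((hg.mono inter_subset_left).sub (hh.mono inter_subset_right)) hexp hx hx₀
      linear_combination hconst
  classical
  have heqs : EqOn (s.piecewise g (h · + k)) g s := piecewise_eqOn s _ _
  have heqt : EqOn (s.piecewise g (h · + k)) (h · + k) t := fun x hx => by
    by_cases hxs : x ∈ s
    · rw [piecewise_eq_of_mem _ _ _ hxs, hgh x ⟨hxs, hx⟩]
    · exact piecewise_eq_of_notMem _ _ _ hxs
  refine ⟨s.piecewise g (h · + k), (hg.congr heqs).union_of_isClosed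
    ((hh.add continuousOn_const).congr heqt) hs ht, ?_⟩
  rintro x (hx | hx)
  · exact (congrArg Complex.exp (heqs hx)).trans (hgf hx)
  · refine (congrArg Complex.exp (heqt hx)).trans ?_
    rw [Complex.exp_add, hk, mul_one]
    exact hhf hx

theorem hasLogOn_of_subtype {f : X → ℂ} {s : Set X} (h : HasLogOn (fun x : s => f x) univ) :
    HasLogOn f s := by
  obtain ⟨g, hg, hgf⟩ := h
  have hext (x : s) : Function.extend Subtype.val g 0 x = g x :=
    Subtype.val_injective.extend_apply g 0 x
  refine ⟨Function.extend Subtype.val g 0, continuousOn_iff_continuous_domRestrict.2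
    ((continuousOn_univ.1 hg).congr fun x => (hext x).symm), fun x hx => ?_⟩
  lift x to s using hx
  exact (congrArg Complex.exp (hext x)).trans (hgf (mem_univ x))

theorem hasLogOn_univ [SimplyConnectedSpace X] [LocallyPathConnectedSpace X] {f : X → ℂ}
    (hf : Continuous f) (hf_ne : ∀ x, f x ≠ 0) : HasLogOn f univ := by
  obtain ⟨x₀⟩ : Nonempty X := inferInstance
  obtain ⟨g, ⟨-, hg⟩, -⟩ := Complex.isCoveringMapOn_exp.existsUnique_continuousMap_lifts ⟨f, hf⟩
    (Complex.exp_log (hf_ne x₀)) hf_ne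
  exact ⟨g, g.continuous.continuousOn, fun x _ => congrFun hg x⟩

theorem hasLogOn_univ_of_homotopy {H : unitInterval × X → ℂ} (hH : Continuous H)
    (hH_ne : ∀ x, H x ≠ 0) (hH_zero : ∀ x, H (0, x) = 1) : HasLogOn (fun x => H (1, x)) univ := by
  obtain ⟨g, hg⟩ : ∃ g : C(unitInterval × X, ℂ),
      (fun z => (⟨Complex.exp z, z.exp_ne_zero⟩ : {w : ℂ // w ≠ 0})) ∘ g =
        fun x => ⟨H x, hH_ne x⟩ :=
    ⟨_, Complex.isCoveringMap_exp.liftHomotopy_lifts ⟨_, hH.subtype_mk hH_ne⟩ (.const X 0)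
      fun x => Subtype.ext ((hH_zero x).trans Complex.exp_zero.symm)⟩
  exact ⟨fun x => g (1, x), by fun_prop, fun x _ => congrArg Subtype.val (congrFun hg (1, x))⟩

theorem hasLogOn_sub_div_sub_of_joinedIn {K : Set ℂ} {p q : ℂ} (h : JoinedIn Kᶜ q p) :
    HasLogOn (fun z => (z - p) / (z - q)) K := by
  obtain ⟨γ, hγ⟩ := h
  have hne : ∀ (t : unitInterval) (z : K), (z : ℂ) - γ t ≠ 0 := fun t z hz =>
    hγ t (sub_eq_zero.1 hz ▸ z.2)
  have hneq : ∀ z : K, (z : ℂ) - q ≠ 0 := fun z => by simpa using hne 0 z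
  have hlog := hasLogOn_univ_of_homotopy (X := K) (H := fun x => (x.2 - γ x.1) / (x.2 - q))
    (Continuous.div (by fun_prop) (by fun_prop) fun x => hneq x.2)
    (fun x => div_ne_zero (hne _ _) (hneq _)) (fun z => by simp [hneq])
  simp only [γ.target] at hlog
  exact hasLogOn_of_subtype hlog

theorem hasLogOn_sub_div_sub_of_isPreconnected {K L : Set ℂ} (hK : IsClosed K)
    (hL : IsPreconnected L) (hKL : Disjoint L K) {p q : ℂ} (hp : p ∈ L) (hq : q ∈ L) :
    HasLogOn (fun z => (z - p) / (z - q)) K := by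
  have hLK : L ⊆ Kᶜ := subset_compl_iff_disjoint_right.2 hKL
  have hpath : IsPathConnected (connectedComponentIn Kᶜ q) :=
    hK.isOpen_compl.connectedComponentIn.isConnected_iff_isPathConnected.1
      (isConnected_connectedComponentIn_iff.2 (hLK hq))
  exact hasLogOn_sub_div_sub_of_joinedIn <| (hpath.joinedIn q (mem_connectedComponentIn (hLK hq)) p
    (hL.subset_connectedComponentIn hq hLK hp)).mono (connectedComponentIn_subset _ _)

theorem not_hasLogOn_sub_sphere (p : ℂ) {r : ℝ} (hr : 0 < r) :
    ¬ HasLogOn (fun z => z - p) (sphere p r) := by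
  rintro ⟨g, hg, hexp⟩
  have hmem : ∀ θ, circleMap p r θ ∈ sphere p r := circleMap_mem_sphere p hr.le
  have hconst : ∀ θ ∈ (univ : Set ℝ),
      Complex.exp (g (circleMap p r θ) - θ * Complex.I) = r := fun θ _ => by
    rw [Complex.exp_sub, div_eq_iff (Complex.exp_ne_zero _)]
    simpa [circleMap] using hexp (hmem θ)
  have hcont : Continuous fun θ : ℝ => g (circleMap p r θ) - θ * Complex.I :=
    (hg.comp_continuous (continuous_circleMap p r) hmem).sub (by fun_prop)
  have hturn := eq_of_forall_exp_eq isPreconnected_univ hcont.continuousOn hconst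
    (mem_univ (2 * Real.pi)) (mem_univ 0)
  have hperiod : circleMap p r (2 * Real.pi) = circleMap p r 0 := by
    simpa using periodic_circleMap p r 0
  rw [hperiod] at hturn
  push_cast at hturn
  exact Complex.two_pi_I_ne_zero (by linear_combination -hturn)

theorem not_hasLogOn_sub_div_sub_frontier {s : Set ℂ} (hs : Bornology.IsBounded s) {p q : ℂ}
    (hp : p ∈ closure s) (hq : q ∉ closure s) :
    ¬ HasLogOn (fun z => (z - p) / (z - q)) (frontier s) := by
  rintro ⟨g, hg, hexp⟩
  obtain ⟨G, hG⟩ := ContinuousMap.exists_restrict_eq isClosed_frontier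
    ⟨_, continuousOn_iff_continuous_domRestrict.1 hg⟩
  have hGg : EqOn G g (frontier s) := fun z hz => DFunLike.congr_fun hG ⟨z, hz⟩
  classical
  -- A zero-free continuous function on the plane that agrees with `z - p` outside `closure s`.
  set F : ℂ → ℂ := (closure s).piecewise (fun z => (z - q) * Complex.exp (G z)) (fun z => z - p)
    with hFdef
  have hF : Continuous F := by
    refine Continuous.piecewise (fun z hz => ?_) (by fun_prop) (by fun_prop)
    have hzs : z ∈ frontier s := frontier_closure_subset hz
    have hzq : z - q ≠ 0 := sub_ne_zero.2 (ne_of_mem_of_not_mem hzs.1 hq)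
    rw [hGg hzs, show Complex.exp (g z) = _ from hexp hzs, mul_div_cancel₀ _ hzq]
  have hF_ne : ∀ z, F z ≠ 0 := fun z => by
    by_cases hz : z ∈ closure s
    · rw [hFdef, piecewise_eq_of_mem _ _ _ hz]
      exact mul_ne_zero (sub_ne_zero.2 (ne_of_mem_of_not_mem hz hq)) (Complex.exp_ne_zero _)
    · rw [hFdef, piecewise_eq_of_notMem _ _ _ hz]
      exact sub_ne_zero.2 (ne_of_mem_of_not_mem hp hz).symm
  obtain ⟨r, hr, hsr⟩ := hs.closure.subset_ball_lt 0 p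
  obtain ⟨ℓ, hℓ, hℓF⟩ := hasLogOn_univ hF hF_ne
  refine not_hasLogOn_sub_sphere p hr ⟨ℓ, hℓ.mono (subset_univ _), fun z hz => ?_⟩
  have hzs : z ∉ closure s := fun h => (mem_ball.1 (hsr h)).ne (mem_sphere.1 hz)
  exact (hℓF (mem_univ z)).trans (piecewise_eq_of_notMem _ _ _ hzs)

end Logarithm

/-- **Janiszewski's theorem** in the plane. -/
theorem mem_connectedComponentIn_inter_of_isPreconnected_compl_union {A B : Set ℂ}
    (hA : IsCompact A) (hB : IsCompact B) (hAB : IsPreconnected (A ∪ B)ᶜ) {p q : ℂ}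
    (hqA : q ∈ connectedComponentIn A p) (hqB : q ∈ connectedComponentIn B p) :
    q ∈ connectedComponentIn (A ∩ B) p := by
  have hpA : p ∈ A := connectedComponentIn_nonempty_iff.1 ⟨q, hqA⟩
  have hpB : p ∈ B := connectedComponentIn_nonempty_iff.1 ⟨q, hqB⟩
  by_contra hq
  obtain ⟨O, -, hpO, hqO, hOc, hdisj⟩ := exists_isOpen_frontier_disjoint (hA.inter hB)
    isOpen_compl_singleton ⟨hpA, hpB⟩ (subset_compl_singleton_iff.2 hq)
  obtain ⟨P, Q, hP, hQ, hcover, hAP, hBQ, hPQ⟩ :=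
    exists_isClosed_cover_of_isPreconnected_compl_union hA hB hAB
      (hOc.of_isClosed_subset isClosed_frontier sdiff_subset) hdisj
  have hlogP : HasLogOn (fun z => (z - p) / (z - q)) P :=
    hasLogOn_sub_div_sub_of_isPreconnected hP isPreconnected_connectedComponentIn
      (hAP.mono_left (connectedComponentIn_subset A p)) (mem_connectedComponentIn hpA) hqA
  have hlogQ : HasLogOn (fun z => (z - p) / (z - q)) Q :=
    hasLogOn_sub_div_sub_of_isPreconnected hQ isPreconnected_connectedComponentIn
      (hBQ.mono_left (connectedComponentIn_subset B p)) (mem_connectedComponentIn hpB) hqB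
  exact not_hasLogOn_sub_div_sub_frontier (hOc.isBounded.subset subset_closure)
    (subset_closure hpO) (fun h => hqO h rfl) ((hlogP.union hP hQ hPQ hlogQ).mono hcover)

/-! ### Boundary behaviour of open maps -/

section Image

variable {X Y : Type*} [TopologicalSpace X] {f : X → Y} {W : Set X} {S : Set Y}

theorem subset_image_of_disjoint_image_frontier [TopologicalSpace Y] [T2Space Y]
    (hW : IsCompact (closure W)) (hf : ContinuousOn f (closure W)) (hfW : IsOpen (f '' W))
    (hS : IsPreconnected S) (hdisj : Disjoint (f '' frontier W) S) (hne : (S ∩ f '' W).Nonempty) :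
    S ⊆ f '' W := by
  refine hS.subset_of_closure_inter_subset hfW hne ?_
  rintro y ⟨hy, hyS⟩
  obtain ⟨x, hx, rfl⟩ : y ∈ f '' closure W :=
    (hW.image_of_continuousOn hf).isClosed.closure_subset_iff.2 (image_mono subset_closure) hy
  by_contra hxW
  have hx_frontier : x ∈ frontier W := ⟨hx, fun h => hxW ⟨x, interior_subset h, rfl⟩⟩
  exact disjoint_left.1 hdisj ⟨x, hx_frontier, rfl⟩ hyS

theorem disjoint_image_of_not_isBounded [MetricSpace Y] (hW : IsCompact (closure W))
    (hf : ContinuousOn f (closure W)) (hfW : IsOpen (f '' W)) (hS : IsPreconnected S)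
    (hdisj : Disjoint (f '' frontier W) S) (hSb : ¬ Bornology.IsBounded S) :
    Disjoint (f '' W) S := by
  rw [disjoint_comm, disjoint_iff_inter_eq_empty, ← not_nonempty_iff_eq_empty]
  intro hne
  exact hSb <| (hW.image_of_continuousOn hf).isBounded.subset <|
    (subset_image_of_disjoint_image_frontier hW hf hfW hS hdisj hne).trans
      (image_mono subset_closure)

end Image

theorem not_isBounded_image_ray {E : Type*} [NormedAddCommGroup E] [NormedSpace ℝ E] (y : E)
    {v : E} (hv : v ≠ 0) : ¬ Bornology.IsBounded ((fun t : ℝ => y + t • v) '' Ioi 0) := by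
  intro hb
  obtain ⟨R, hR, hball⟩ := hb.subset_ball_lt 0 y
  have hv_pos : 0 < ‖v‖ := norm_pos_iff.2 hv
  have hmem := hball ⟨R / ‖v‖, div_pos hR hv_pos, rfl⟩
  simp [norm_smul, abs_of_pos hR, hv_pos.ne'] at hmem

theorem eq_of_map_eq_of_isOpen_sdiff {X E F : Type*} [TopologicalSpace X] [T2Space X]
    [NormedAddCommGroup E] [NormedSpace ℝ E] [AddCommGroup F] [Module ℝ F] (φ : E →ₗ[ℝ] F)
    {f : X → E} {J K : Set X} (hK : IsCompact K) (hf : ContinuousOn f K) (hKJ : IsOpen (K \ J))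
    (hfKJ : IsOpen (f '' (K \ J))) {y : E} (hJ : ∀ z ∈ J, φ (f z) = φ y → f z = y) :
    ∀ z ∈ K, φ (f z) = φ y → f z = y := by
  intro z hz hφ
  by_cases hzJ : z ∈ J
  · exact hJ z hzJ hφ
  by_contra hne
  have hclosure : closure (K \ J) ⊆ K := closure_minimal sdiff_subset hK.isClosed
  have hfrontier : frontier (K \ J) ⊆ J := fun w hw => by
    by_contra hwJ
    exact hw.2 (hKJ.interior_eq.symm ▸ ⟨hclosure hw.1, hwJ⟩)
  have hray : Disjoint (f '' frontier (K \ J)) ((fun t : ℝ => y + t • (f z - y)) '' Ioi 0) := by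
    rw [disjoint_left]
    rintro _ ⟨w, hw, rfl⟩ ⟨t, ht, htw⟩
    have hfw : f w = y := hJ w (hfrontier hw) (by simp [← htw, hφ])
    simp [hfw, sub_eq_zero, hne, (mem_Ioi.1 ht).ne'] at htw
  have hdisj := disjoint_image_of_not_isBounded
    (hK.of_isClosed_subset isClosed_closure hclosure) (hf.mono hclosure) hfKJ
    (isPreconnected_Ioi.image _ (by fun_prop)) hray
    (not_isBounded_image_ray y (sub_ne_zero.2 hne))
  exact disjoint_left.1 hdisj ⟨z, ⟨hz, hzJ⟩, rfl⟩ ⟨1, mem_Ioi.2 one_pos, by simp⟩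

theorem inter_subsingleton_of_im_lt {f : ℂ → ℂ} {c y : ℂ} {r : ℝ} (hf : ContinuousOn f (ball c r))
    (hopen : ∀ U ⊆ ball c r, IsOpen U → IsOpen (f '' U))
    (hlight : IsTotallyDisconnected (ball c r ∩ f ⁻¹' {y})) {A B : Set ℂ}
    (hA : IsCompact A) (hAc : IsPreconnected A) (hAr : A ⊆ ball c r)
    (hAim : ∀ z ∈ A, f z = y ∨ y.im < (f z).im)
    (hB : IsCompact B) (hBc : IsPreconnected B) (hBr : B ⊆ ball c r)
    (hBim : ∀ z ∈ B, f z = y ∨ (f z).im < y.im) : (A ∩ B).Subsingleton := by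
  rintro p ⟨hpA, hpB⟩ q ⟨hqA, hqB⟩
  obtain ⟨K, hK, hABK, hKr, hKc, hKopen⟩ := exists_isCompact_isPreconnected_compl
    (by simp) (hA.union hB).isClosed (pos_of_mem_ball (hAr hpA)) (union_subset hAr hBr)
  have hfK : ContinuousOn f K := hf.mono hKr
  have hline : ∀ z ∈ K, (f z).im = y.im → f z = y :=
    eq_of_map_eq_of_isOpen_sdiff Complex.imLm hK hfK hKopen
      (hopen _ (sdiff_subset.trans hKr) hKopen) fun z hz hzy =>
        hz.elim (fun h => (hAim z h).resolve_right fun hlt => hlt.ne' hzy)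
          (fun h => (hBim z h).resolve_right fun hlt => hlt.ne hzy)
  set A' := K ∩ f ⁻¹' {w | y.im ≤ w.im}
  set B' := K ∩ f ⁻¹' {w | w.im ≤ y.im}
  have hA' : IsCompact A' := hK.of_isClosed_subset (hfK.preimage_isClosed_of_isClosed hK.isClosed
    (isClosed_le continuous_const Complex.continuous_im)) inter_subset_left
  have hB' : IsCompact B' := hK.of_isClosed_subset (hfK.preimage_isClosed_of_isClosed hK.isClosed
    (isClosed_le Complex.continuous_im continuous_const)) inter_subset_left
  have hAA' : A ⊆ A' := fun z hz =>
    ⟨hABK (Or.inl hz), (hAim z hz).elim (fun h => (congrArg Complex.im h).ge) le_of_lt⟩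
  have hBB' : B ⊆ B' := fun z hz =>
    ⟨hABK (Or.inr hz), (hBim z hz).elim (fun h => (congrArg Complex.im h).le) le_of_lt⟩
  have hunion : A' ∪ B' = K := by
    rw [← inter_union_distrib_left, inter_eq_left]
    exact fun z _ => le_total y.im (f z).im
  have hq : q ∈ connectedComponentIn (A' ∩ B') p :=
    mem_connectedComponentIn_inter_of_isPreconnected_compl_union hA' hB' (hunion.symm ▸ hKc)
      (hAc.subset_connectedComponentIn hpA hAA' hqA)
      (hBc.subset_connectedComponentIn hpB hBB' hqB)
  have hfibre : A' ∩ B' ⊆ ball c r ∩ f ⁻¹' {y} := fun z hz =>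
    ⟨hKr hz.1.1, hline z hz.1.1 (le_antisymm hz.2.2 hz.1.2)⟩
  exact hlight _ ((connectedComponentIn_subset _ _).trans hfibre)
    isPreconnected_connectedComponentIn
    (mem_connectedComponentIn ⟨hAA' hpA, hBB' hpB⟩) hq

/-! ### Normal domains -/

/-- `U` is a normal domain of `f` over `V`: the map `f` is open on `U`, continuous up to the
boundary of the relatively compact open set `U`, and takes no boundary point into `V`. Hence
`U ∩ f ⁻¹' V` is mapped properly into `V`. Neither set is required to be connected. -/
structure IsNormalDomainOver {X Y : Type*} [TopologicalSpace X] [TopologicalSpace Y] (f : X → Y)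
    (U : Set X) (V : Set Y) : Prop where
  isOpen : IsOpen U
  isCompact_closure : IsCompact (closure U)
  continuousOn : ContinuousOn f (closure U)
  isOpen_image : ∀ W ⊆ U, IsOpen W → IsOpen (f '' W)
  disjoint : Disjoint (f '' frontier U) V

section NormalDomain

variable {X Y : Type*} [TopologicalSpace X] [TopologicalSpace Y] {f : X → Y} {U : Set X}
  {V V' : Set Y}

theorem exists_isNormalDomainOver [LocallyCompactSpace X] [T2Space X] [T2Space Y] {Ω : Set X}
    (hΩ : IsOpen Ω) (hf : ContinuousOn f Ω) (hopen : ∀ W ⊆ Ω, IsOpen W → IsOpen (f '' W)) {x : X}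
    (hx : x ∈ Ω) (hlight : IsTotallyDisconnected (Ω ∩ f ⁻¹' {f x})) :
    ∃ U V, x ∈ U ∧ closure U ⊆ Ω ∧ IsOpen V ∧ f x ∈ V ∧ IsNormalDomainOver f U V := by
  obtain ⟨L, hL, hxL, hLΩ⟩ := exists_compact_subset hΩ hx
  have hK : IsCompact (L ∩ f ⁻¹' {f x}) := hL.of_isClosed_subset
    ((hf.mono hLΩ).preimage_isClosed_of_isClosed hL.isClosed isClosed_singleton) inter_subset_left
  have hxK : x ∈ L ∩ f ⁻¹' {f x} := ⟨interior_subset hxL, rfl⟩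
  have hcomp : connectedComponentIn (L ∩ f ⁻¹' {f x}) x ⊆ interior L := fun z hz =>
    hlight _ ((connectedComponentIn_subset _ _).trans (inter_subset_inter_left _ hLΩ))
      isPreconnected_connectedComponentIn (mem_connectedComponentIn hxK) hz ▸ hxL
  obtain ⟨U, hU, hxU, hUL, hUc, hdisj⟩ :=
    exists_isOpen_frontier_disjoint hK isOpen_interior hxK hcomp
  have hUL : closure U ⊆ L := hUL.trans interior_subset
  have hUΩ : closure U ⊆ Ω := hUL.trans hLΩ
  refine ⟨U, (f '' frontier U)ᶜ, hxU, hUΩ, ?_, ?_, hU, hUc, hf.mono hUΩ,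
    fun W hW => hopen W (hW.trans (subset_closure.trans hUΩ)), disjoint_compl_right⟩
  · exact ((hUc.of_isClosed_subset isClosed_frontier sdiff_subset).image_of_continuousOn
      (hf.mono (sdiff_subset.trans hUΩ))).isClosed.isOpen_compl
  · rintro ⟨z, hz, hzx⟩
    exact disjoint_left.1 hdisj hz ⟨hUL hz.1, hzx⟩

namespace IsNormalDomainOver

theorem mono (h : IsNormalDomainOver f U V) (hV : V' ⊆ V) : IsNormalDomainOver f U V' :=
  { h with disjoint := h.disjoint.mono_right hV }

theorem isOpen_inter_preimage (h : IsNormalDomainOver f U V) (hV : IsOpen V) :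
    IsOpen (U ∩ f ⁻¹' V) :=
  (h.continuousOn.mono subset_closure).isOpen_inter_preimage h.isOpen hV

theorem inter_preimage_closure_subset (h : IsNormalDomainOver f U V) :
    U ∩ f ⁻¹' closure V ⊆ closure (U ∩ f ⁻¹' V) := by
  rintro p ⟨hpU, hpV⟩
  rw [_root_.mem_closure_iff]
  intro O hO hpO
  obtain ⟨_, ⟨z, hz, rfl⟩, hzV⟩ := _root_.mem_closure_iff.1 hpV _
    (h.isOpen_image _ inter_subset_right (hO.inter h.isOpen)) ⟨p, ⟨hpO, hpU⟩, rfl⟩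
  exact ⟨z, hz.1, hz.2, hzV⟩

theorem isCompact_closure_inter_preimage_singleton [T1Space Y] (h : IsNormalDomainOver f U V)
    (y : Y) : IsCompact (closure U ∩ f ⁻¹' {y}) :=
  h.isCompact_closure.of_isClosed_subset
    (h.continuousOn.preimage_isClosed_of_isClosed isClosed_closure isClosed_singleton)
    inter_subset_left

theorem closure_inter_preimage_subset (h : IsNormalDomainOver f U V) :
    closure U ∩ f ⁻¹' V ⊆ U := fun x hx => by
  by_contra hxU
  exact disjoint_left.1 h.disjoint ⟨x, ⟨hx.1, fun hi => hxU (interior_subset hi)⟩, rfl⟩ hx.2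

variable [LocallyConnectedSpace X]

theorem disjoint_image_frontier_connectedComponentIn (h : IsNormalDomainOver f U V)
    (hV : IsOpen V) (x : X) :
    Disjoint (f '' frontier (connectedComponentIn (U ∩ f ⁻¹' V) x)) V := by
  rw [disjoint_left]
  rintro _ ⟨z, hz, rfl⟩ hzV
  have hzU : z ∈ closure U :=
    closure_mono ((connectedComponentIn_subset _ x).trans inter_subset_left) hz.1
  exact disjoint_left.1
    (disjoint_frontier_connectedComponentIn (h.isOpen_inter_preimage hV) x) hz
    ⟨h.closure_inter_preimage_subset ⟨hzU, hzV⟩, hzV⟩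

variable [T2Space Y]

theorem subset_image_connectedComponentIn (h : IsNormalDomainOver f U V) (hV : IsOpen V)
    (hVc : IsPreconnected V) {x : X} (hx : x ∈ U ∩ f ⁻¹' V) :
    V ⊆ f '' connectedComponentIn (U ∩ f ⁻¹' V) x := by
  have hCU : connectedComponentIn (U ∩ f ⁻¹' V) x ⊆ U :=
    (connectedComponentIn_subset _ x).trans inter_subset_left
  exact subset_image_of_disjoint_image_frontier
    (h.isCompact_closure.of_isClosed_subset isClosed_closure (closure_mono hCU))
    (h.continuousOn.mono (closure_mono hCU))
    (h.isOpen_image _ hCU (h.isOpen_inter_preimage hV).connectedComponentIn) hVc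
    (h.disjoint_image_frontier_connectedComponentIn hV x)
    ⟨f x, hx.2, x, mem_connectedComponentIn hx, rfl⟩

theorem finite_connectedComponentIn (h : IsNormalDomainOver f U V) (hV : IsOpen V)
    (hVc : IsPreconnected V) :
    (connectedComponentIn (U ∩ f ⁻¹' V) '' (U ∩ f ⁻¹' V)).Finite := by
  rcases (U ∩ f ⁻¹' V).eq_empty_or_nonempty with hempty | ⟨x₀, hx₀⟩
  · simp [hempty]
  have hfibre : closure U ∩ f ⁻¹' {f x₀} ⊆ U ∩ f ⁻¹' V := fun z hz =>
    have hzV : z ∈ f ⁻¹' V := (congrArg (· ∈ V) hz.2).mpr hx₀.2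
    ⟨h.closure_inter_preimage_subset ⟨hz.1, hzV⟩, hzV⟩
  obtain ⟨t, -, ht⟩ := (h.isCompact_closure_inter_preimage_singleton (f x₀)).elim_nhds_subcover
    (connectedComponentIn (U ∩ f ⁻¹' V)) fun z hz =>
      (h.isOpen_inter_preimage hV).connectedComponentIn.mem_nhds
        (mem_connectedComponentIn (hfibre hz))
  refine (t.finite_toSet.image (connectedComponentIn (U ∩ f ⁻¹' V))).subset ?_
  rintro _ ⟨x, hx, rfl⟩
  obtain ⟨z, hzx, hz⟩ := h.subset_image_connectedComponentIn hV hVc hx hx₀.2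
  have hzU : z ∈ U := (connectedComponentIn_subset _ _ hzx).1
  obtain ⟨w, hw, hzw⟩ := mem_iUnion₂.1 (ht ⟨subset_closure hzU, hz⟩)
  exact ⟨w, hw, (connectedComponentIn_eq hzw).trans (connectedComponentIn_eq hzx).symm⟩

theorem exists_finite_cover (h : IsNormalDomainOver f U V) (hV : IsOpen V)
    (hVc : IsPreconnected V) :
    ∃ 𝒞 : Set (Set X), 𝒞.Finite ∧
      (∀ C ∈ 𝒞, IsCompact C ∧ IsPreconnected C ∧ C ⊆ closure U ∧ MapsTo f C (closure V)) ∧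
      U ∩ f ⁻¹' closure V ⊆ ⋃₀ 𝒞 := by
  set G := U ∩ f ⁻¹' V
  have hfin : (connectedComponentIn G '' G).Finite := h.finite_connectedComponentIn hV hVc
  refine ⟨closure '' (connectedComponentIn G '' G), hfin.image _, ?_, ?_⟩
  · rintro _ ⟨_, ⟨x, -, rfl⟩, rfl⟩
    have hCG : connectedComponentIn G x ⊆ G := connectedComponentIn_subset G x
    have hCU : closure (connectedComponentIn G x) ⊆ closure U :=
      closure_mono (hCG.trans inter_subset_left)
    have hmaps : MapsTo f (connectedComponentIn G x) V := fun z hz => (hCG hz).2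
    exact ⟨h.isCompact_closure.of_isClosed_subset isClosed_closure hCU,
      isPreconnected_connectedComponentIn.closure, hCU,
      hmaps.closure_of_continuousOn (h.continuousOn.mono hCU)⟩
  · have hG : G ⊆ ⋃₀ (connectedComponentIn G '' G) := fun z hz =>
      ⟨_, mem_image_of_mem _ hz, mem_connectedComponentIn hz⟩
    have hclosure := h.inter_preimage_closure_subset.trans (closure_mono hG)
    rwa [hfin.closure_sUnion, ← sUnion_image] at hclosure

end IsNormalDomainOver

end NormalDomain

theorem eq_or_mul_im_sub_pos_of_mem_closedBall {y w : ℂ} {s : ℝ}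
    (hw : w ∈ closedBall (y + s * Complex.I) |s|) : w = y ∨ 0 < s * (w.im - y.im) := by
  rw [or_iff_not_imp_left]
  intro hne
  have hpos : 0 < Complex.normSq (w - y) := Complex.normSq_pos.2 (sub_ne_zero.2 hne)
  have hle : Complex.normSq (w - (y + s * Complex.I)) ≤ s ^ 2 := by
    rw [Complex.normSq_eq_norm_sq, ← sq_abs s]
    exact pow_le_pow_left₀ (norm_nonneg _) (mem_closedBall_iff_norm.1 hw) 2
  simp only [Complex.normSq_apply, Complex.sub_re, Complex.sub_im, Complex.add_re, Complex.add_im,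
    Complex.re_ofReal_mul, Complex.im_ofReal_mul, Complex.I_re, Complex.I_im] at hpos hle
  nlinarith

theorem IsNormalDomainOver.exists_finite_cover_ball {f : ℂ → ℂ} {U V : Set ℂ} {y : ℂ} {s : ℝ}
    (h : IsNormalDomainOver f U V) (hs : s ≠ 0) (hV : ball (y + s * Complex.I) |s| ⊆ V) :
    ∃ 𝒞 : Set (Set ℂ), 𝒞.Finite ∧
      (∀ C ∈ 𝒞, IsCompact C ∧ IsPreconnected C ∧ C ⊆ closure U ∧
        ∀ z ∈ C, f z = y ∨ 0 < s * ((f z).im - y.im)) ∧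
      U ∩ f ⁻¹' {y} ⊆ ⋃₀ 𝒞 := by
  obtain ⟨𝒞, hfin, h𝒞, hcover⟩ :=
    (h.mono hV).exists_finite_cover isOpen_ball (convex_ball _ _).isPreconnected
  rw [closure_ball _ (abs_ne_zero.2 hs)] at h𝒞 hcover
  refine ⟨𝒞, hfin, fun C hC => ?_, subset_trans ?_ hcover⟩
  · obtain ⟨hCc, hCp, hCU, hCf⟩ := h𝒞 C hC
    exact ⟨hCc, hCp, hCU, fun z hz => eq_or_mul_im_sub_pos_of_mem_closedBall (hCf hz)⟩
  · refine inter_subset_inter_right U (preimage_mono (singleton_subset_iff.2 ?_))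
    simp [mem_closedBall, dist_eq_norm]

theorem exists_isOpen_finite_inter_fibre {Ω : Set ℂ} (hΩ : IsOpen Ω) {f : ℂ → ℂ}
    (hf : ContinuousOn f Ω) (hopen : ∀ W ⊆ Ω, IsOpen W → IsOpen (f '' W)) {x : ℂ} (hx : x ∈ Ω)
    (hlight : IsTotallyDisconnected (Ω ∩ f ⁻¹' {f x})) :
    ∃ U, IsOpen U ∧ x ∈ U ∧ (U ∩ f ⁻¹' {f x}).Finite := by
  obtain ⟨r, hr, hrΩ⟩ := isOpen_iff.1 hΩ x hx
  replace hf := hf.mono hrΩ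
  replace hopen W (hW : W ⊆ ball x r) := hopen W (hW.trans hrΩ)
  replace hlight : IsTotallyDisconnected (ball x r ∩ f ⁻¹' {f x}) := fun t ht =>
    hlight t (ht.trans (inter_subset_inter_left _ hrΩ))
  obtain ⟨U, V, hxU, hUr, hV, hxV, hUV⟩ :=
    exists_isNormalDomainOver isOpen_ball hf hopen (mem_ball_self hr) hlight
  obtain ⟨ε, hε, hεV⟩ := isOpen_iff.1 hV (f x) hxV
  have hdisc : ∀ s : ℝ, |s| = ε / 2 → ball (f x + s * Complex.I) |s| ⊆ V := fun s hs =>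
    (ball_subset_ball' (by simp [dist_eq_norm, hs])).trans hεV
  have hs : |ε / 2| = ε / 2 := abs_of_pos (half_pos hε)
  obtain ⟨𝒜, h𝒜fin, h𝒜, h𝒜cover⟩ :=
    hUV.exists_finite_cover_ball (half_pos hε).ne' (hdisc _ hs)
  obtain ⟨ℬ, hℬfin, hℬ, hℬcover⟩ :=
    hUV.exists_finite_cover_ball (neg_ne_zero.2 (half_pos hε).ne') (hdisc _ ((abs_neg _).trans hs))
  refine ⟨U, hUV.isOpen, hxU, Finite.subset
    (h𝒜fin.biUnion fun A hA => hℬfin.biUnion fun B hB => Subsingleton.finite (s := A ∩ B) ?_)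
    fun z hz => ?_⟩
  · obtain ⟨hAc, hAp, hAU, hAf⟩ := h𝒜 A hA
    obtain ⟨hBc, hBp, hBU, hBf⟩ := hℬ B hB
    exact inter_subsingleton_of_im_lt hf hopen hlight
      hAc hAp (hAU.trans hUr) (fun z hz => (hAf z hz).imp_right fun h => by nlinarith)
      hBc hBp (hBU.trans hUr) (fun z hz => (hBf z hz).imp_right fun h => by nlinarith)
  · obtain ⟨A, hA, hzA⟩ := h𝒜cover hz
    obtain ⟨B, hB, hzB⟩ := hℬcover hz
    exact mem_iUnion₂.2 ⟨A, hA, mem_iUnion₂.2 ⟨B, hB, hzA, hzB⟩⟩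

end Stoilow

theorem stoilow_light_open_implies_discrete_general {Ω : Set ℂ} (hΩ : IsOpen Ω) {f : ℂ → ℂ}
    (hf : ContinuousOn f Ω) (hopen : ∀ U ⊆ Ω, IsOpen U → IsOpen (f '' U)) {x : ℂ} (hx : x ∈ Ω)
    (hlight : IsTotallyDisconnected (Ω ∩ f ⁻¹' {f x})) :
    ∃ V, IsOpen V ∧ x ∈ V ∧ V ∩ (Ω ∩ f ⁻¹' {f x}) = {x} := by
  obtain ⟨U, hU, hxU, hfin⟩ := Stoilow.exists_isOpen_finite_inter_fibre hΩ hf hopen hx hlight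
  refine ⟨U \ ((U ∩ f ⁻¹' {f x}) \ {x}), hU.sdiff hfin.sdiff.isClosed, ⟨hxU, fun h => h.2 rfl⟩, ?_⟩
  ext z
  constructor
  · rintro ⟨⟨hzU, hz⟩, -, hzf⟩
    by_contra hzx
    exact hz ⟨⟨hzU, hzf⟩, hzx⟩
  · rintro rfl
    exact ⟨⟨hxU, fun h => h.2 rfl⟩, hx, rfl⟩

/-- **Stoïlow's discreteness theorem.** A continuous, light, open map on a
planar domain is discrete: every fiber is a discrete subset of the domain. -/
theorem stoilow_light_open_implies_discrete
    (Ω : Set ℂ) (hΩopen : IsOpen Ω) (hΩconn : IsConnected Ω)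
    (f : ℂ → ℂ)
    (hcont : ContinuousOn f Ω)
    (hlight : ∀ y : ℂ, IsTotallyDisconnected (Ω ∩ f ⁻¹' {y}))
    (hopen : ∀ U : Set ℂ, U ⊆ Ω → IsOpen U → IsOpen (f '' U)) :
    ∀ y : ℂ, ∀ x ∈ Ω ∩ f ⁻¹' {y},
      ∃ V : Set ℂ, IsOpen V ∧ x ∈ V ∧ V ∩ (Ω ∩ f ⁻¹' {y}) = {x} := by
  rintro _ x ⟨hx, rfl⟩
  exact stoilow_light_open_implies_discrete_general hΩopen hcont hopen hx (hlight (f x))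
end

section
/- Let Ω be a domain (open connected set) in ℂ and let f : Ω → ℂ be a continuous, open, and discrete mapping. Then the branch set B_f of f, i.e. the set of points x ∈ Ω at which f fails to be a local homeomorphism, is a discrete subset of Ω. -/
/-!
Let `U` be a normal neighbourhood of `x₀`: a small neighbourhood on which `f` is a proper open map
to a disc, with `x₀` as the only point over `f x₀`. The claim is that `f` is locally injective at
every point of `U` other than `x₀`.

First, two lifts of a segment cannot fork at a point `q ≠ x₀` of `U`, that is, start at `q` and then
separate. Slit the disc along a ray from `f q` which contains neither `f x₀` nor the segment. The
preimage of the slit disc is connected, since `f x₀` has a single preimage, so it contains a path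
joining the ends of the fork. Together with the fork this path makes a closed curve through `q`,
and there is a bounded open set `E` with `q` in its closure whose frontier lies on the curve. It is
obtained from two logarithms of `(z - p) / (z - q)`, each one defined off an arc of the curve from
`q` to `p`: they differ by a locally constant function, which cannot be constant near `q`. The
frontier of `E` is mapped off the open slit, so `f '' E`, being open with compact closure, misses
the slit altogether. But near `q` the frontier of `E` lies over the segment, which forces `f '' E`
to contain all points near `f q` off the segment's ray, some of which are on the slit.

Now let `V` be a normal neighbourhood of `q ≠ x₀` in `U`. The number of points of `V` over `y` is
lower semicontinuous in `y`. Where it is constant on an open segment, `f` is a covering and the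
lifts of the segment extend to the endpoints; in the absence of forks distinct lifts have distinct
endpoints, so the number does not drop there. By Baire's theorem it is then constant, and it is one
at `f q`; hence `f` is injective on `V`.
-/

/-- The branch set of `f` on `Ω`: the set of points of `Ω` at which `f` fails to be a
local homeomorphism, i.e. at which there is no open neighbourhood `U ⊆ Ω` of the point
on which `f` restricts to a homeomorphism onto an open subset of `ℂ`. -/
def branchSet (f : ℂ → ℂ) (Ω : Set ℂ) : Set ℂ :=
  {x ∈ Ω | ¬ ∃ U : Set ℂ, IsOpen U ∧ x ∈ U ∧ U ⊆ Ω ∧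
      ∃ e : PartialHomeomorph ℂ ℂ, e.source = U ∧ Set.EqOn f (↑e) U}

section

open Set Filter Topology Metric

/-! ### A weak Jordan curve theorem -/

section Logarithm

open Complex

theorem exists_continuousOn_exp_eq_div_of_path {a b : ℂ} (α : Path a b) :
    ∃ h : ℂ → ℂ, ContinuousOn h (range α)ᶜ ∧
      ∀ z ∈ (range α)ᶜ, exp (h z) = (z - b) / (z - a) := by
  classical
  have sub_ne_zero_of_notMem (t : unitInterval) (z : ((range α)ᶜ : Set ℂ)) : (z : ℂ) - α t ≠ 0 :=
    sub_ne_zero.2 fun h ↦ z.2 ⟨t, h.symm⟩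
  let H : C(unitInterval × ((range α)ᶜ : Set ℂ), {z : ℂ // z ≠ 0}) :=
    { toFun := fun x ↦ ⟨(x.2 - α x.1) / (x.2 - α 0),
        div_ne_zero (sub_ne_zero_of_notMem _ _) (sub_ne_zero_of_notMem _ _)⟩
      continuous_toFun := .subtype_mk
        (.div (by fun_prop) (by fun_prop) fun _ ↦ sub_ne_zero_of_notMem _ _) _ }
  have H_zero (z : ((range α)ᶜ : Set ℂ)) :
      H (0, z) = ⟨exp (ContinuousMap.const ((range α)ᶜ : Set ℂ) (0 : ℂ) z), exp_ne_zero _⟩ :=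
    Subtype.ext (by simpa [H] using div_self (sub_ne_zero_of_notMem 0 z))
  let G := isCoveringMap_exp.liftHomotopy H (.const _ 0) H_zero
  have exp_G (x : unitInterval × ((range α)ᶜ : Set ℂ)) :
      exp (G x) = (x.2 - α x.1) / (x.2 - α 0) :=
    congrArg Subtype.val (congrFun (isCoveringMap_exp.liftHomotopy_lifts H (.const _ 0) H_zero) x)
  refine ⟨fun z ↦ if hz : z ∈ (range α)ᶜ then G (1, ⟨z, hz⟩) else 0, ?_, fun z hz ↦ ?_⟩
  · have restrict_eq : ((range α)ᶜ).domRestrict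
        (fun z ↦ if hz : z ∈ (range α)ᶜ then G (1, ⟨z, hz⟩) else 0) = fun z ↦ G (1, z) :=
      funext fun z ↦ dif_pos z.2
    rw [continuousOn_iff_continuous_domRestrict, restrict_eq]
    fun_prop
  · simp only [dif_pos hz, exp_G, α.target, α.source]

theorem eventually_eq_of_eventually_exp_eq {X : Type*} [TopologicalSpace X] {g : X → ℂ} {x : X}
    (hg : ContinuousAt g x) (hexp : ∀ᶠ y in 𝓝 x, exp (g y) = exp (g x)) :
    ∀ᶠ y in 𝓝 x, g y = g x := by
  obtain ⟨V, hV, inj⟩ :=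
    isLocallyInjective_iff_nhds.1 isCoveringMap_exp.isLocalHomeomorph.isLocallyInjective (g x)
  filter_upwards [hg hV, hexp] with y hyV hy
  exact inj hyV (mem_of_mem_nhds hV) (Subtype.ext hy)

theorem not_eventually_exp_eq_sub (h : ℂ → ℂ) (q : ℂ) :
    ¬ ∀ᶠ z in 𝓝[≠] q, ContinuousAt h z ∧ exp (h z) = z - q := by
  intro hlog
  obtain ⟨ε, hε, hball⟩ := Metric.eventually_nhds_iff_ball.1 (eventually_nhdsWithin_iff.1 hlog)
  obtain ⟨r, hr, hrε⟩ := exists_between hε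
  have on_circle (θ : ℝ) := hball (circleMap q r θ)
    (sphere_subset_ball hrε (circleMap_mem_sphere q hr.le θ)) (circleMap_ne_center hr.ne')
  let k (θ : ℝ) : ℂ := h (circleMap q r θ) - θ * I
  have hk : Continuous k := .sub (continuous_iff_continuousAt.2 fun θ ↦
    (on_circle θ).1.comp (continuous_circleMap q r).continuousAt) (by fun_prop)
  have exp_k (θ : ℝ) : exp (k θ) = r := by
    simp only [k, exp_sub, (on_circle θ).2, circleMap_sub_center, circleMap_zero]
    exact mul_div_cancel_right₀ _ (exp_ne_zero _)
  have k_const : k (2 * Real.pi) = k 0 := isCoveringMap_exp.const_of_comp hk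
    (fun θ θ' ↦ Subtype.ext ((exp_k θ).trans (exp_k θ').symm)) _ _
  simp [k, circleMap, Real.pi_ne_zero] at k_const

theorem not_eventually_exp_eq_div {p q : ℂ} (hpq : q ≠ p) (h : ℂ → ℂ) :
    ¬ ∀ᶠ z in 𝓝[≠] q, ContinuousAt h z ∧ exp (h z) = (z - p) / (z - q) := by
  intro hlog
  have quotient_tendsto : ContinuousAt (fun z ↦ (z - p) / (q - p)) q := by fun_prop
  have near_one : ∀ᶠ z in 𝓝 q, (z - p) / (q - p) ∈ slitPlane :=
    quotient_tendsto.eventually_mem (isOpen_slitPlane.mem_nhds (by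
      simp [div_self (sub_ne_zero.2 hpq)]))
  refine not_eventually_exp_eq_sub
    (fun z ↦ log ((z - p) / (q - p)) + log (q - p) - h z) q ?_
  filter_upwards [hlog, near_one.filter_mono nhdsWithin_le_nhds, self_mem_nhdsWithin]
    with z ⟨hz, hexp⟩ hslit hzq
  have hqp : q - p ≠ 0 := sub_ne_zero.2 hpq
  have hzq : z - q ≠ 0 := sub_ne_zero.2 hzq
  refine ⟨.sub (.add (.clog (by fun_prop) hslit) continuousAt_const) hz, ?_⟩
  have hzp : z - p ≠ 0 := fun h0 ↦ slitPlane_ne_zero hslit (by simp [h0])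
  rw [exp_sub, exp_add, exp_log (slitPlane_ne_zero hslit), exp_log hqp, hexp]
  field_simp

end Logarithm

theorem isConnected_compl_ball {E : Type*} [NormedAddCommGroup E] [NormedSpace ℝ E]
    (hrank : 1 < Module.rank ℝ E) (x : E) (r : ℝ) : IsConnected (ball x r)ᶜ := by
  rcases le_or_gt r 0 with hr | hr
  · rw [ball_eq_empty.2 hr, compl_empty]
    exact isConnected_univ
  have image_eq : (fun a : ℝ × E ↦ x + a.1 • a.2) '' (Ici r ×ˢ sphere 0 1) = (ball x r)ᶜ := by
    ext z
    constructor
    · rintro ⟨⟨t, u⟩, ⟨ht, hu⟩, rfl⟩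
      have hu : ‖u‖ = 1 := mem_sphere_zero_iff_norm.1 hu
      simpa [norm_smul, hu] using ht.trans (le_abs_self t)
    · intro hz
      have hrz : r ≤ ‖z - x‖ := by simpa [dist_eq_norm] using hz
      have hzx : ‖z - x‖ ≠ 0 := (hr.trans_le hrz).ne'
      exact ⟨(‖z - x‖, ‖z - x‖⁻¹ • (z - x)), ⟨hrz, by simp [norm_smul, hzx]⟩,
        by simp [smul_smul, hzx]⟩
  rw [← image_eq]
  exact (isConnected_Ici.prod (isConnected_sphere hrank 0 zero_le_one)).image _ (by fun_prop)

theorem continuousAt_piecewise_of_eventually_eq {X Y : Type*} [TopologicalSpace X]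
    [TopologicalSpace Y] {A B : Set X} [DecidablePred (· ∈ A)] {g h : X → Y} {x : X}
    (hA : IsClosed A) (hB : IsClosed B) (hg : ContinuousOn g Bᶜ) (hh : ContinuousOn h Aᶜ)
    (hx : x ∉ A ∩ B) (heq : ∀ᶠ z in 𝓝 x, z ∉ A ∪ B → g z = h z) :
    ContinuousAt (A.piecewise g h) x := by
  by_cases hxA : x ∈ A
  · have hBx : Bᶜ ∈ 𝓝 x := hB.isOpen_compl.mem_nhds fun hxB ↦ hx ⟨hxA, hxB⟩
    refine (hg.continuousAt hBx).congr ?_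
    filter_upwards [hBx, heq] with z hzB hz
    by_cases hzA : z ∈ A
    · exact (A.piecewise_eq_of_mem g h hzA).symm
    · exact (hz (not_or.2 ⟨hzA, hzB⟩)).trans (A.piecewise_eq_of_notMem g h hzA).symm
  · have hAx : Aᶜ ∈ 𝓝 x := hA.isOpen_compl.mem_nhds hxA
    exact (hh.continuousAt hAx).congr
      (mem_of_superset hAx fun z hz ↦ (A.piecewise_eq_of_notMem g h hz).symm)

open Complex in
-- Two logarithms of `(z - p) / (z - q)` that differ near `q` by a constant would glue to a
-- logarithm on a punctured neighbourhood of `q`, where there is none.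
theorem mem_closure_setOf_log_sub_log_ne {q p c : ℂ} {A B : Set ℂ} {h₁ h₂ : ℂ → ℂ} (hqp : q ≠ p)
    (hA : IsClosed A) (hB : IsClosed B) (hAB : A ∩ B ⊆ {q, p})
    (hh₁ : ContinuousOn h₁ Aᶜ) (exp_h₁ : ∀ z ∈ Aᶜ, exp (h₁ z) = (z - p) / (z - q))
    (hh₂ : ContinuousOn h₂ Bᶜ) (exp_h₂ : ∀ z ∈ Bᶜ, exp (h₂ z) = (z - p) / (z - q))
    (hc : exp c = 1) : q ∈ closure ((A ∪ B)ᶜ ∩ (h₁ - h₂) ⁻¹' {c}ᶜ) := by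
  classical
  by_contra hq
  have agree : ∀ᶠ z in 𝓝 q, z ∉ A ∪ B → h₂ z + c = h₁ z := by
    filter_upwards [isClosed_closure.isOpen_compl.mem_nhds hq] with z hz hzAB
    by_contra hne
    exact hz (subset_closure ⟨hzAB, fun h ↦ hne (by rw [← show _ = c from h]; simp)⟩)
  refine not_eventually_exp_eq_div hqp (A.piecewise (fun z ↦ h₂ z + c) h₁) ?_
  filter_upwards [agree.eventually_nhds.filter_mono nhdsWithin_le_nhds, self_mem_nhdsWithin,
    mem_nhdsWithin_of_mem_nhds (isOpen_ne.mem_nhds hqp)] with z hz hzq hzp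
  have hzAB : z ∉ A ∩ B := fun h ↦ (hAB h).elim hzq hzp
  refine ⟨continuousAt_piecewise_of_eventually_eq hA hB (hh₂.add continuousOn_const) hh₁ hzAB hz,
    ?_⟩
  by_cases hzA : z ∈ A
  · rw [A.piecewise_eq_of_mem _ _ hzA, exp_add, hc, mul_one, exp_h₂ z fun hzB ↦ hzAB ⟨hzA, hzB⟩]
  · rw [A.piecewise_eq_of_notMem _ _ hzA, exp_h₁ z hzA]

theorem subset_of_frontier_subset {X : Type*} [TopologicalSpace X] {E K : Set X} (hE : IsOpen E)
    (hfrontier : frontier E ⊆ K) (hK : IsPreconnected Kᶜ) (hKE : ¬ Kᶜ ⊆ E) : E ⊆ K := by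
  intro z hzE
  by_contra hzK
  refine hKE (hK.subset_of_closure_inter_subset hE ⟨z, hzK, hzE⟩ fun y hy ↦ ?_)
  by_contra hyE
  exact hy.2 (hfrontier ⟨hy.1, fun h ↦ hyE (interior_subset h)⟩)

theorem exists_isOpen_frontier_subset_range_union {q p : ℂ} {K : Set ℂ} (hqp : q ≠ p)
    (α β : Path q p) (hαβ : range α ∩ range β ⊆ {q, p}) (hK : range α ∪ range β ⊆ K)
    (hKc : IsConnected Kᶜ) :
    ∃ E ⊆ K, IsOpen E ∧ frontier E ⊆ range α ∪ range β ∧ q ∈ closure E := by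
  obtain ⟨h₁, hh₁, exp_h₁⟩ := exists_continuousOn_exp_eq_div_of_path α
  obtain ⟨h₂, hh₂, exp_h₂⟩ := exists_continuousOn_exp_eq_div_of_path β
  have hα : IsClosed (range α) := (isCompact_range α.continuous).isClosed
  have hβ : IsClosed (range β) := (isCompact_range β.continuous).isClosed
  have hO : IsOpen (range α ∪ range β)ᶜ := (hα.union hβ).isOpen_compl
  have hh : ContinuousOn (h₁ - h₂) (range α ∪ range β)ᶜ :=
    (hh₁.mono (compl_subset_compl.2 subset_union_left)).sub
      (hh₂.mono (compl_subset_compl.2 subset_union_right))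
  have exp_h {z} (hz : z ∈ (range α ∪ range β)ᶜ) : Complex.exp ((h₁ - h₂) z) = 1 := by
    rw [Pi.sub_apply, Complex.exp_sub, exp_h₁ z fun h ↦ hz (.inl h), ← exp_h₂ z fun h ↦ hz (.inr h),
      div_self (Complex.exp_ne_zero _)]
  obtain ⟨z₀, hz₀⟩ := hKc.nonempty
  have hz₀' : z₀ ∈ (range α ∪ range β)ᶜ := fun h ↦ hz₀ (hK h)
  let E := (range α ∪ range β)ᶜ ∩ (h₁ - h₂) ⁻¹' {(h₁ - h₂) z₀}ᶜ
  have hE : IsOpen E := hh.isOpen_inter_preimage hO isOpen_compl_singleton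
  have frontier_E : frontier E ⊆ range α ∪ range β := by
    intro z hz
    by_contra hzO
    have h_const : ∀ᶠ y in 𝓝 z, (h₁ - h₂) y = (h₁ - h₂) z :=
      eventually_eq_of_eventually_exp_eq (hh.continuousAt (hO.mem_nhds hzO))
        (mem_of_superset (hO.mem_nhds hzO) fun y hy ↦ (exp_h hy).trans (exp_h hzO).symm)
    obtain ⟨y, hyE, hy⟩ := ((mem_closure_iff_frequently.1 hz.1).and_eventually h_const).exists
    exact hz.2 (hE.interior_eq.symm ▸ ⟨hzO, fun h ↦ hyE.2 (hy.trans h)⟩)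
  have hEK : E ⊆ K := subset_of_frontier_subset hE (frontier_E.trans hK) hKc.isPreconnected
    fun hsub ↦ (hsub hz₀).2 rfl
  exact ⟨E, hEK, hE, frontier_E, mem_closure_setOf_log_sub_log_ne hqp hα hβ hαβ hh₁ exp_h₁ hh₂
    exp_h₂ (exp_h hz₀')⟩

/-! ### Proper open maps -/

section ProperOpen

variable {X Y : Type*} [TopologicalSpace X] [TopologicalSpace Y] {f : X → Y} {D G : Set Y}

theorem disjoint_image_of_disjoint_image_frontier {E : Set X} {L : Set Y} (hL : IsPreconnected L)
    (hopen : IsOpen (f '' E)) (hclosed : IsClosed (f '' closure E))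
    (hfrontier : Disjoint L (f '' frontier E)) (hLE : ¬ L ⊆ f '' E) : Disjoint L (f '' E) := by
  by_contra hdisj
  refine hLE (hL.subset_of_closure_inter_subset hopen (not_disjoint_iff_nonempty_inter.1 hdisj) ?_)
  rintro y ⟨hy, hyL⟩
  obtain ⟨z, hz, rfl⟩ := closure_minimal (image_mono subset_closure) hclosed hy
  by_contra hfz
  exact disjoint_left.1 hfrontier hyL
    ⟨z, ⟨hz, fun hzE ↦ hfz (mem_image_of_mem f (interior_subset hzE))⟩, rfl⟩

/-- `f` restricts to a continuous, open and proper map from the open set `U` to the open set `D`, so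
that its fibres over `D` vary semicontinuously. Properness is stated as compactness of the preimage
in `U` of each compact subset of `D`. -/
structure IsProperOpen (f : X → Y) (U : Set X) (D : Set Y) : Prop where
  isOpen_source : IsOpen U
  isOpen_target : IsOpen D
  continuousOn : ContinuousOn f U
  mapsTo : MapsTo f U D
  isOpen_image : ∀ O ⊆ U, IsOpen O → IsOpen (f '' O)
  isCompact_preimage : ∀ K ⊆ D, IsCompact K → IsCompact (U ∩ f ⁻¹' K)

namespace IsProperOpen

variable {U : Set X}

theorem isOpen_inter_preimage (hU : IsProperOpen f U D) (hG : IsOpen G) : IsOpen (U ∩ f ⁻¹' G) :=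
  hU.continuousOn.isOpen_inter_preimage hU.isOpen_source hG

theorem isCompact_fiber (hU : IsProperOpen f U D) (y : Y) : IsCompact (U ∩ f ⁻¹' {y}) := by
  by_cases hy : y ∈ D
  · exact hU.isCompact_preimage _ (singleton_subset_iff.2 hy) isCompact_singleton
  · have fiber_eq : U ∩ f ⁻¹' {y} = ∅ :=
      eq_empty_of_forall_notMem fun z hz ↦ hy (hz.2 ▸ hU.mapsTo hz.1)
    exact fiber_eq ▸ isCompact_empty

variable [T2Space Y] [LocallyCompactSpace Y]

theorem eventually_fiber_subset (hU : IsProperOpen f U D) {y : Y} (hy : y ∈ D) {Q : Set X}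
    (hQ : IsOpen Q) (hfiber : U ∩ f ⁻¹' {y} ⊆ Q) : ∀ᶠ y' in 𝓝 y, U ∩ f ⁻¹' {y'} ⊆ Q := by
  obtain ⟨K, hK, hKD, hKc⟩ := local_compact_nhds (hU.isOpen_target.mem_nhds hy)
  have hC : IsCompact (f '' ((U ∩ f ⁻¹' K) \ Q)) :=
    ((hU.isCompact_preimage K hKD hKc).diff hQ).image_of_continuousOn
      (hU.continuousOn.mono (sdiff_subset.trans inter_subset_left))
  have hyC : y ∉ f '' ((U ∩ f ⁻¹' K) \ Q) := by
    rintro ⟨z, ⟨hz, hzQ⟩, hzy⟩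
    exact hzQ (hfiber ⟨hz.1, hzy⟩)
  filter_upwards [hK, hC.isClosed.isOpen_compl.mem_nhds hyC] with y' hy'K hy'C z hz
  by_contra hzQ
  exact hy'C ⟨z, ⟨⟨hz.1, mem_of_eq_of_mem (x := f z) hz.2 hy'K⟩, hzQ⟩, hz.2⟩

theorem subset_image_of_subset_union (hU : IsProperOpen f U D) (hG : IsOpen G) (hGD : G ⊆ D)
    (hGc : IsPreconnected G) {A B : Set X} (hA : IsOpen A) (hB : IsOpen B)
    (hAB : U ∩ f ⁻¹' G ⊆ A ∪ B) (hdisj : U ∩ f ⁻¹' G ∩ (A ∩ B) = ∅)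
    (hne : (U ∩ f ⁻¹' G ∩ A).Nonempty) : G ⊆ f '' (U ∩ f ⁻¹' G ∩ A) := by
  have himage : IsOpen (f '' (U ∩ f ⁻¹' G ∩ A)) :=
    hU.isOpen_image _ (inter_subset_left.trans inter_subset_left)
      ((hU.isOpen_inter_preimage hG).inter hA)
  obtain ⟨z₀, hz₀⟩ := hne
  refine hGc.subset_of_closure_inter_subset himage ⟨f z₀, hz₀.1.2, mem_image_of_mem f hz₀⟩ ?_
  rintro y ⟨hy, hyG⟩
  by_contra hyA
  have fiber_subset : U ∩ f ⁻¹' {y} ⊆ B := fun z ⟨hzU, hzy⟩ ↦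
    have hz : z ∈ U ∩ f ⁻¹' G := ⟨hzU, mem_of_eq_of_mem (x := f z) hzy hyG⟩
    (hAB hz).resolve_left fun hzA ↦ hyA ⟨z, ⟨hz, hzA⟩, hzy⟩
  obtain ⟨_, ⟨z, hz, rfl⟩, hzB⟩ := ((mem_closure_iff_frequently.1 hy).and_eventually
    (hU.eventually_fiber_subset (hGD hyG) hB fiber_subset)).exists
  exact hdisj.subset ⟨hz.1, hz.2, hzB ⟨hz.1.1, rfl⟩⟩

theorem isPreconnected_inter_preimage (hU : IsProperOpen f U D) (hG : IsOpen G) (hGD : G ⊆ D)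
    (hGc : IsPreconnected G) {y : Y} (hy : y ∈ G) (hfiber : (U ∩ f ⁻¹' {y}).Subsingleton) :
    IsPreconnected (U ∩ f ⁻¹' G) := by
  rw [isPreconnected_iff_subset_of_disjoint]
  intro A B hA hB hAB hdisj
  by_contra! hcon
  obtain ⟨a, ha, haA⟩ := not_subset.1 hcon.1
  obtain ⟨b, hb, hbB⟩ := not_subset.1 hcon.2
  obtain ⟨x, ⟨hx, hxA⟩, hxy⟩ := hU.subset_image_of_subset_union hG hGD hGc hA hB hAB hdisj
    ⟨b, hb, (hAB hb).resolve_right hbB⟩ hy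
  obtain ⟨x', ⟨hx', hxB⟩, hxy'⟩ := hU.subset_image_of_subset_union hG hGD hGc hB hA
    (union_comm A B ▸ hAB) (inter_comm A B ▸ hdisj) ⟨a, ha, (hAB ha).resolve_left haA⟩ hy
  obtain rfl : x = x' := hfiber ⟨hx.1, hxy⟩ ⟨hx'.1, hxy'⟩
  exact hdisj.subset ⟨hx, hxA, hxB⟩

end IsProperOpen

/-- `f` restricts to a continuous, open and discrete map on the open set `Ω`: the class of maps
whose branch set is studied. -/
structure IsOpenDiscreteOn (f : X → Y) (Ω : Set X) : Prop where
  isOpen_domain : IsOpen Ω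
  continuousOn : ContinuousOn f Ω
  isOpen_image : ∀ O ⊆ Ω, IsOpen O → IsOpen (f '' O)
  isDiscrete_fiber : ∀ y, IsDiscrete (Ω ∩ f ⁻¹' {y})

/-- `U` is a normal neighbourhood of `x` over `D`: a neighbourhood on which `f` is an open and
proper map to `D`, with `x` as the only point over `f x`. Open discrete maps are studied locally on
such neighbourhoods. -/
structure IsNormalNhd (f : X → Y) (U : Set X) (D : Set Y) (x : X) : Prop
    extends IsProperOpen f U D where
  mem : x ∈ U
  eq_of_map_eq : ∀ z ∈ U, f z = f x → z = x

end ProperOpen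

theorem IsOpenDiscreteOn.finite_fiber {X Y : Type*} [TopologicalSpace X] [TopologicalSpace Y]
    {f : X → Y} {U Ω : Set X} {D : Set Y} (hf : IsOpenDiscreteOn f Ω) (hU : IsProperOpen f U D)
    (hUΩ : U ⊆ Ω) (y : Y) : (U ∩ f ⁻¹' {y}).Finite :=
  (hU.isCompact_fiber y).finite ((hf.isDiscrete_fiber y).mono (inter_subset_inter_left _ hUΩ))

section NormalNhd

variable {X Y : Type*} [MetricSpace X] [ProperSpace X] {f : X → Y} {Ω : Set X}

theorem IsOpenDiscreteOn.isProperOpen_ball_inter_preimage [TopologicalSpace Y] [T2Space Y]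
    (hf : IsOpenDiscreteOn f Ω) {x : X} {R : ℝ} (hR : closedBall x R ⊆ Ω) {D : Set Y}
    (hD : IsOpen D) (hsphere : Disjoint D (f '' sphere x R)) :
    IsProperOpen f (ball x R ∩ f ⁻¹' D) D := by
  have hball : ball x R ⊆ Ω := ball_subset_closedBall.trans hR
  refine
    { isOpen_source := (hf.continuousOn.mono hball).isOpen_inter_preimage isOpen_ball hD
      isOpen_target := hD
      continuousOn := hf.continuousOn.mono (inter_subset_left.trans hball)
      mapsTo := fun z hz ↦ hz.2
      isOpen_image := fun O hO ↦ hf.isOpen_image O (hO.trans (inter_subset_left.trans hball))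
      isCompact_preimage := fun K hKD hK ↦ ?_ }
  have inter_eq : ball x R ∩ f ⁻¹' D ∩ f ⁻¹' K = closedBall x R ∩ f ⁻¹' K := by
    refine Subset.antisymm (fun z hz ↦ ⟨ball_subset_closedBall hz.1.1, hz.2⟩) fun z hz ↦ ?_
    have hzR : z ∉ sphere x R := fun h ↦ disjoint_left.1 hsphere (hKD hz.2) (mem_image_of_mem f h)
    exact ⟨⟨lt_of_le_of_ne hz.1 hzR, hKD hz.2⟩, hz.2⟩
  rw [inter_eq]
  exact (isCompact_closedBall x R).of_isClosed_subset
    ((hf.continuousOn.mono hR).preimage_isClosed_of_isClosed isClosed_closedBall hK.isClosed)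
    inter_subset_left

theorem IsOpenDiscreteOn.exists_isNormalNhd [MetricSpace Y] (hf : IsOpenDiscreteOn f Ω) {x : X}
    (hx : x ∈ Ω) {N : Set X} (hN : N ∈ 𝓝 x) : ∃ R r : ℝ, closedBall x R ⊆ N ∩ Ω ∧
      IsNormalNhd f (ball x R ∩ f ⁻¹' ball (f x) r) (ball (f x) r) x := by
  obtain ⟨V, hV, hVx⟩ :=
    isDiscrete_iff_forall_mem_exists_isOpen.1 (hf.isDiscrete_fiber (f x)) x ⟨hx, rfl⟩
  have hxV : x ∈ V := (hVx.symm.subset rfl).1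
  obtain ⟨R, hR, hball⟩ := nhds_basis_closedBall.mem_iff.1
    (inter_mem (inter_mem hN (hf.isOpen_domain.mem_nhds hx)) (hV.mem_nhds hxV))
  have unique (z) (hz : z ∈ closedBall x R) (hzx : f z = f x) : z = x :=
    hVx.subset ⟨(hball hz).2, (hball hz).1.2, hzx⟩
  have hsphere : IsClosed (f '' sphere x R) :=
    ((isCompact_sphere x R).image_of_continuousOn (hf.continuousOn.mono
      fun z hz ↦ (hball (sphere_subset_closedBall hz)).1.2)).isClosed
  have hx_sphere : f x ∉ f '' sphere x R := by
    rintro ⟨z, hz, hzx⟩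
    rw [unique z (sphere_subset_closedBall hz) hzx, mem_sphere, dist_self] at hz
    exact hR.ne hz
  obtain ⟨r, hr, hdisj⟩ := Metric.isOpen_iff.1 hsphere.isOpen_compl _ hx_sphere
  exact ⟨R, r, fun z hz ↦ (hball hz).1,
    { toIsProperOpen := hf.isProperOpen_ball_inter_preimage (fun z hz ↦ (hball hz).1.2) isOpen_ball
        (disjoint_left.2 hdisj)
      mem := ⟨mem_ball_self hR, mem_ball_self hr⟩
      eq_of_map_eq := fun z hz ↦ unique z (ball_subset_closedBall hz.1) }⟩

end NormalNhd

/-! ### Rays and slit domains -/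

/-- The closed ray from `v` in the direction `u`, along which convex sets are slit. It is encoded
through `SameRay`, so that it is the whole space when `u = 0`. -/
def ray {E : Type*} [AddCommGroup E] [Module ℝ E] (v u : E) : Set E := {z | SameRay ℝ u (z - v)}

section

variable {E : Type*} [AddCommGroup E] [Module ℝ E] {u v w : E}

theorem add_smul_mem_ray (v u : E) {t : ℝ} (ht : 0 ≤ t) : v + t • u ∈ ray v u := by
  simpa [ray] using (SameRay.sameRay_nonneg_smul_right u ht : SameRay ℝ u (t • u))

theorem ray_eq_image (v : E) (hu : u ≠ 0) : ray v u = (fun t : ℝ ↦ v + t • u) '' Ici 0 := by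
  refine Subset.antisymm (fun z hz ↦ ?_) (image_subset_iff.2 fun t ht ↦ add_smul_mem_ray v u ht)
  obtain ⟨t, ht, hzt⟩ := SameRay.exists_nonneg_left hz hu
  exact ⟨t, ht, by simp [hzt]⟩

theorem self_mem_ray (v u : E) : v ∈ ray v u := by simp [ray]

theorem eq_of_mem_ray_of_mem_ray {z : E} (huw : ¬ SameRay ℝ u w) (hu : z ∈ ray v u)
    (hw : z ∈ ray v w) : z = v := by
  by_contra hz
  exact huw (SameRay.trans hu hw.symm fun h ↦ (hz (sub_eq_zero.1 h)).elim)

theorem exists_not_sameRay_of_one_lt_rank (hrank : 1 < Module.rank ℝ E) {a b : E} (ha : a ≠ 0)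
    (hb : b ≠ 0) : ∃ u : E, ¬ SameRay ℝ u a ∧ ¬ SameRay ℝ u b := by
  obtain ⟨c, hac⟩ := exists_linearIndependent_pair_of_one_lt_rank hrank ha
  have hc : ¬ (SameRay ℝ a c ∨ SameRay ℝ a (-c)) := by
    rwa [sameRay_or_sameRay_neg_iff_not_linearIndependent, not_not]
  have hc0 : c ≠ 0 := by
    rintro rfl
    exact hc (.inl (.zero_right a))
  rw [not_or] at hc
  by_cases hcb : SameRay ℝ c b
  · refine ⟨-c, fun h ↦ hc.2 h.symm, fun h ↦ hc0 ?_⟩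
    exact eq_zero_of_sameRay_self_neg (hcb.trans h.symm fun h0 ↦ (hb h0).elim)
  · exact ⟨c, fun h ↦ hc.1 h.symm, hcb⟩

theorem ray_diff_singleton_eq_image (v : E) (hu : u ≠ 0) :
    ray v u \ {v} = (fun t : ℝ ↦ v + t • u) '' Ioi 0 := by
  rw [ray_eq_image v hu]
  ext z
  constructor
  · rintro ⟨⟨t, ht, rfl⟩, htv⟩
    exact ⟨t, (mem_Ici.1 ht).lt_of_ne' fun h ↦ htv (by simp [h]), rfl⟩
  · rintro ⟨t, ht, rfl⟩
    exact ⟨⟨t, (mem_Ioi.1 ht).le, rfl⟩, by simpa using ⟨(mem_Ioi.1 ht).ne', hu⟩⟩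

variable [TopologicalSpace E] [IsTopologicalAddGroup E] [ContinuousSMul ℝ E]

theorem isPreconnected_ray_diff_singleton (v : E) (hu : u ≠ 0) :
    IsPreconnected (ray v u \ {v}) := by
  rw [ray_diff_singleton_eq_image v hu]
  exact isPreconnected_Ioi.image _ (by fun_prop)

theorem frequently_mem_ray_diff_singleton (v : E) (hu : u ≠ 0) :
    ∃ᶠ z in 𝓝 v, z ∈ ray v u \ {v} := by
  have htendsto : Tendsto (fun t : ℝ ↦ v + t • u) (𝓝[>] 0) (𝓝 v) :=
    (Continuous.tendsto' (by fun_prop) _ _ (by simp)).mono_left nhdsWithin_le_nhds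
  rw [ray_diff_singleton_eq_image v hu]
  exact htendsto.frequently
    (eventually_mem_nhdsWithin.frequently.mono fun t ht ↦ mem_image_of_mem _ ht)

section Hausdorff

variable [T2Space E]

theorem isClosedEmbedding_add_smul (v : E) (hu : u ≠ 0) :
    IsClosedEmbedding fun t : ℝ ↦ v + t • u :=
  (Homeomorph.addLeft v).isClosedEmbedding.comp (isClosedEmbedding_smul_left hu)

theorem isClosed_ray (v : E) (hu : u ≠ 0) : IsClosed (ray v u) := by
  rw [ray_eq_image v hu]
  exact (isClosedEmbedding_add_smul v hu).isClosedMap _ isClosed_Ici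

theorem not_ray_diff_singleton_subset_of_isCompact (v : E) (hu : u ≠ 0) {K : Set E}
    (hK : IsCompact K) : ¬ ray v u \ {v} ⊆ K := by
  rw [ray_diff_singleton_eq_image v hu, image_subset_iff]
  exact fun h ↦ not_bddAbove_Ioi 0
    (((isClosedEmbedding_add_smul v hu).isCompact_preimage hK).bddAbove.mono h)

end Hausdorff

theorem interior_ray_eq_empty (hrank : 1 < Module.rank ℝ E) (v : E) (hu : u ≠ 0) :
    interior (ray v u) = ∅ := by
  refine eq_empty_of_forall_notMem fun z hz ↦ ?_
  obtain ⟨c, huc⟩ := exists_linearIndependent_pair_of_one_lt_rank hrank hu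
  have hcont : ContinuousAt (fun t : ℝ ↦ z + t • c) 0 := by fun_prop
  have eventually_mem : ∀ᶠ t : ℝ in 𝓝[≠] 0, z + t • c ∈ ray v u :=
    (hcont.eventually_mem (by simpa using mem_interior_iff_mem_nhds.1 hz)).filter_mono
      nhdsWithin_le_nhds
  obtain ⟨t, htc, ht⟩ := (eventually_mem.and self_mem_nhdsWithin).exists
  have hz' := interior_subset hz
  rw [ray_eq_image v hu] at hz' htc
  obtain ⟨⟨a, -, rfl⟩, ⟨b, -, hb⟩⟩ := And.intro hz' htc
  refine ht (LinearIndependent.pair_iff.1 huc (a - b) t ?_).2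
  have hab : b • u = a • u + t • c := by simpa [add_assoc] using hb
  rw [sub_smul, hab, sub_add_eq_sub_sub, sub_self, zero_sub, neg_add_cancel]

theorem isPreconnected_diff_ray {D : Set E} (hD : IsOpen D) (hDc : Convex ℝ D) (hv : v ∈ D)
    (hu : u ≠ 0) : IsPreconnected (D \ ray v u) := by
  have hcont : ContinuousAt (fun t : ℝ ↦ v - t • u) 0 := by fun_prop
  have eventually_mem : ∀ᶠ t : ℝ in 𝓝[>] 0, v - t • u ∈ D :=
    (hcont.eventually_mem (by simpa using hD.mem_nhds hv)).filter_mono nhdsWithin_le_nhds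
  obtain ⟨t, htD, ht⟩ := (eventually_mem.and self_mem_nhdsWithin).exists
  have starConvex : StarConvex ℝ (v - t • u) (D \ ray v u) := by
    intro z ⟨hzD, hz⟩ a b ha hb hab
    refine ⟨hDc htD hzD ha hb hab, fun hray ↦ hz ?_⟩
    have hbz : b • (z - v) = (a • (v - t • u) + b • z - v) + (a * t) • u := by
      rw [← eq_sub_iff_add_eq'] at hab
      subst hab
      module
    have hub : SameRay ℝ u (b • (z - v)) :=
      hbz ▸ hray.add_right (.sameRay_nonneg_smul_right u (mul_nonneg ha (le_of_lt ht)))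
    rcases hb.eq_or_lt with rfl | hb
    · obtain rfl : a = 1 := by simpa using hab
      have hneg : SameRay ℝ u (-t • u) := by simpa [ray] using hray
      rcases sameRay_smul_right_iff.1 hneg with h | h
      exacts [(neg_nonneg.1 h).not_gt ht |>.elim, (hu h).elim]
    · simpa [ray, smul_smul, hb.ne'] using hub.pos_smul_right (inv_pos.2 hb)
  rcases (D \ ray v u).eq_empty_or_nonempty with hempty | hne
  · exact hempty ▸ isPreconnected_empty
  · exact (starConvex.isPathConnected (starConvex.mem hne)).isConnected.isPreconnected

end

/-! ### Forks -/

section Lift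

variable {X Y : Type*} [TopologicalSpace X]

/-- `s` is a continuous lift through `f` of the curve `ℓ` over the set `I` of parameters, with
values in `U`; what `s` does outside `I` is irrelevant. Lifts compare the fibres along `ℓ`. -/
structure IsLift (f : X → Y) (U : Set X) (ℓ : ℝ → Y) (I : Set ℝ) (s : ℝ → X) : Prop where
  continuousOn : ContinuousOn s I
  mapsTo : MapsTo s I U
  map_eq : ∀ t ∈ I, f (s t) = ℓ t

variable {f : X → Y} {U : Set X} {ℓ : ℝ → Y} {I J : Set ℝ} {s s' : ℝ → X}

theorem IsLift.mono (hs : IsLift f U ℓ I s) (hJI : J ⊆ I) : IsLift f U ℓ J s where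
  continuousOn := hs.continuousOn.mono hJI
  mapsTo := hs.mapsTo.mono_left hJI
  map_eq t ht := hs.map_eq t (hJI ht)

theorem IsLift.eq_of_apply_eq_apply (hs : IsLift f U ℓ I s) (hs' : IsLift f U ℓ J s')
    (hℓ : Function.Injective ℓ) {t t' : ℝ} (ht : t ∈ I) (ht' : t' ∈ J) (h : s t = s' t') :
    t = t' :=
  hℓ (by rw [← hs.map_eq t ht, h, hs'.map_eq t' ht'])

theorem exists_path_range_eq_image_Icc {g : ℝ → X} {a b : ℝ} (hab : a ≤ b)
    (hg : ContinuousOn g (Icc a b)) : ∃ α : Path (g a) (g b), range α = g '' Icc a b := by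
  have hrange : range (Path.segment a b) = Icc a b := by
    rw [Path.range_segment, segment_eq_Icc hab]
  exact ⟨(Path.segment a b).map' (hrange ▸ hg), (range_comp g _).trans (congrArg (g '' ·) hrange)⟩

end Lift

section Fork

variable {X F : Type*} [TopologicalSpace X] [AddCommGroup F] [Module ℝ F]

/-- Two lifts of the segment `t ↦ v + t • w`, `0 ≤ t ≤ b`, which start at the same point but differ
at every later parameter. A fork is what makes the number of preimages drop at `v`. -/
structure IsFork (f : X → F) (U : Set X) (v w : F) (b : ℝ) (s₁ s₂ : ℝ → X) : Prop where
  direction_ne_zero : w ≠ 0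
  length_pos : 0 < b
  isLift_left : IsLift f U (fun t ↦ v + t • w) (Icc 0 b) s₁
  isLift_right : IsLift f U (fun t ↦ v + t • w) (Icc 0 b) s₂
  start_eq : s₁ 0 = s₂ 0
  apply_ne : ∀ t ∈ Ioc 0 b, s₁ t ≠ s₂ t

namespace IsFork

variable {f : X → F} {U : Set X} {v w : F} {b : ℝ} {s₁ s₂ : ℝ → X}

theorem mono (h : IsFork f U v w b s₁ s₂) {V : Set X} (hUV : U ⊆ V) : IsFork f V v w b s₁ s₂ :=
  { h with
    isLift_left := { h.isLift_left with mapsTo := h.isLift_left.mapsTo.mono_right hUV }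
    isLift_right := { h.isLift_right with mapsTo := h.isLift_right.mapsTo.mono_right hUV } }

theorem injective_line (h : IsFork f U v w b s₁ s₂) : Function.Injective fun t : ℝ ↦ v + t • w :=
  (add_right_injective v).comp (smul_left_injective ℝ h.direction_ne_zero)

theorem zero_mem_Icc (h : IsFork f U v w b s₁ s₂) : (0 : ℝ) ∈ Icc 0 b := ⟨le_rfl, h.length_pos.le⟩

theorem map_start_eq (h : IsFork f U v w b s₁ s₂) : f (s₁ 0) = v := by
  simpa using h.isLift_left.map_eq 0 h.zero_mem_Icc

theorem map_mem_ray (h : IsFork f U v w b s₁ s₂) {z : X}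
    (hz : z ∈ s₁ '' Icc 0 b ∪ s₂ '' Icc 0 b) : f z ∈ ray v w := by
  rcases hz with ⟨t, ht, rfl⟩ | ⟨t, ht, rfl⟩
  · exact h.isLift_left.map_eq t ht ▸ add_smul_mem_ray v w ht.1
  · exact h.isLift_right.map_eq t ht ▸ add_smul_mem_ray v w ht.1

-- The first path is a piece of `s₁` avoiding `c`; the second one follows `s₂`, then `c` and the
-- rest of `s₁` backwards. They are not simple, as `c` may cross the fork.
theorem exists_paths [T2Space X] (h : IsFork f U v w b s₁ s₂) (c : Path (s₁ b) (s₂ b))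
    (hc : s₁ 0 ∉ range c) : ∃ p ≠ s₁ 0, ∃ α β : Path (s₁ 0) p, range α ∩ range β ⊆ {s₁ 0, p} ∧
      range α ∪ range β = s₁ '' Icc 0 b ∪ s₂ '' Icc 0 b ∪ range c := by
  have hs₁ := h.isLift_left
  have hs₂ := h.isLift_right
  have eventually_notMem : ∀ᶠ t in 𝓝[Icc 0 b] 0, s₁ t ∉ range c :=
    (hs₁.continuousOn 0 h.zero_mem_Icc).eventually_mem
      ((isCompact_range c.continuous).isClosed.isOpen_compl.mem_nhds hc)
  rw [nhdsWithin_Icc_eq_nhdsGE h.length_pos] at eventually_notMem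
  obtain ⟨a, ha, hac⟩ := mem_nhdsGE_iff_exists_Icc_subset.1
    (eventually_notMem.and (mem_nhdsWithin_of_mem_nhds (Iio_mem_nhds h.length_pos)))
  have hab : a < b := (hac ⟨ha.le, le_rfl⟩).2
  have hleft : Icc 0 a ⊆ Icc 0 b := Icc_subset_Icc_right hab.le
  have hright : Icc a b ⊆ Icc 0 b := Icc_subset_Icc_left ha.le
  obtain ⟨α, hα⟩ := exists_path_range_eq_image_Icc ha.le (hs₁.continuousOn.mono hleft)
  obtain ⟨β₁, hβ₁⟩ := exists_path_range_eq_image_Icc h.length_pos.le hs₂.continuousOn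
  obtain ⟨β₂, hβ₂⟩ := exists_path_range_eq_image_Icc hab.le (hs₁.continuousOn.mono hright)
  let β : Path (s₁ 0) (s₁ a) := ((β₁.cast h.start_eq rfl).trans c.symm).trans β₂.symm
  have hβ : range β = s₂ '' Icc 0 b ∪ range c ∪ s₁ '' Icc a b := by
    simp only [β, Path.trans_range, Path.symm_range, hβ₂, ← hβ₁]
    rfl
  refine ⟨s₁ a, fun heq ↦ ha.ne' ?_, α, β, ?_, ?_⟩
  · exact hs₁.eq_of_apply_eq_apply hs₁ h.injective_line ⟨ha.le, hab.le⟩ h.zero_mem_Icc heq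
  · rw [hα, hβ]
    rintro _ ⟨⟨t, ht, rfl⟩, (⟨t', ht', heq⟩ | htc) | ⟨t', ht', heq⟩⟩
    · obtain rfl := hs₂.eq_of_apply_eq_apply hs₁ h.injective_line ht' (hleft ht) heq
      rcases ht.1.eq_or_lt with rfl | htpos
      exacts [.inl rfl, (h.apply_ne t' ⟨htpos, ht'.2⟩ heq.symm).elim]
    · exact ((hac ht).1 htc).elim
    · obtain rfl := hs₁.eq_of_apply_eq_apply hs₁ h.injective_line (hright ht') (hleft ht) heq
      exact .inr (congrArg s₁ (le_antisymm ht.2 ht'.1))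
  · rw [hα, hβ, ← Icc_union_Icc_eq_Icc ha.le hab.le, image_union s₁]
    ac_rfl

end IsFork

end Fork

theorem IsOpenDiscreteOn.eventually_mem_image_of_frontier_subset_ray {X F : Type*} [MetricSpace X]
    [ProperSpace X] [NormedAddCommGroup F] [NormedSpace ℝ F] [LocallyCompactSpace F]
    (hrank : 1 < Module.rank ℝ F) {f : X → F} {Ω E : Set X} {q : X} {w : F}
    (hf : IsOpenDiscreteOn f Ω) (hq : q ∈ Ω) (hE : IsOpen E) (hqE : q ∈ closure E) (hw : w ≠ 0)
    (hfrontier : ∀ᶠ z in 𝓝 q, z ∈ frontier E → f z ∈ ray (f q) w) :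
    ∀ᶠ y in 𝓝 (f q), y ∉ ray (f q) w → y ∈ f '' E := by
  obtain ⟨R, r, hball, hV⟩ := hf.exists_isNormalNhd hq hfrontier
  set V := ball q R ∩ f ⁻¹' ball (f q) r
  have hfq : f q ∈ ball (f q) r := hV.mem.2
  have hG : IsOpen (ball (f q) r \ ray (f q) w) := isOpen_ball.sdiff (isClosed_ray _ hw)
  have hcover : V ∩ f ⁻¹' (ball (f q) r \ ray (f q) w) ⊆ E ∪ (closure E)ᶜ := by
    intro z hz
    by_contra hzE
    simp only [mem_union, mem_compl_iff, not_or, not_not] at hzE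
    exact hz.2.2 ((hball (ball_subset_closedBall hz.1.1)).1
      ⟨hzE.2, fun h ↦ hzE.1 (interior_subset h)⟩)
  have hdisj : E ∩ (closure E)ᶜ = ∅ := disjoint_iff_inter_eq_empty.1
    (disjoint_compl_right.mono_left subset_closure)
  have himage : ¬ f '' (E ∩ V) ⊆ ray (f q) w := fun hsub ↦ by
    obtain ⟨z, hzV, hzE⟩ := mem_closure_iff.1 hqE V hV.isOpen_source hV.mem
    have hz := interior_maximal hsub
      (hV.isOpen_image _ inter_subset_right (hE.inter hV.isOpen_source))
      (mem_image_of_mem f ⟨hzE, hzV⟩)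
    simp only [interior_ray_eq_empty hrank _ hw, mem_empty_iff_false] at hz
  obtain ⟨_, ⟨z, ⟨hzE, hzV⟩, rfl⟩, hzray⟩ := not_subset.1 himage
  have hsub := hV.subset_image_of_subset_union hG sdiff_subset
    (isPreconnected_diff_ray isOpen_ball (convex_ball _ _) hfq hw) hE isClosed_closure.isOpen_compl
    hcover (by rw [hdisj, inter_empty]) ⟨z, ⟨hzV, hzV.2, hzray⟩, hzE⟩
  filter_upwards [isOpen_ball.mem_nhds hfq] with y hy hyray
  exact image_mono inter_subset_right (hsub ⟨hy, hyray⟩)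

theorem IsNormalNhd.exists_path_avoiding_ray {X F : Type*} [TopologicalSpace X]
    [LocallyPathConnectedSpace X] [AddCommGroup F] [Module ℝ F] [TopologicalSpace F]
    [IsTopologicalAddGroup F] [ContinuousSMul ℝ F] [T2Space F] [LocallyCompactSpace F] {f : X → F}
    {U : Set X} {D : Set F} {x₀ : X} {v u : F} (hU : IsNormalNhd f U D x₀) (hD : Convex ℝ D)
    (hv : v ∈ D) (hu : u ≠ 0) (hx₀ : f x₀ ∉ ray v u) {a b : X} (ha : a ∈ U) (hb : b ∈ U)
    (hfa : f a ∉ ray v u) (hfb : f b ∉ ray v u) :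
    ∃ c : Path a b, range c ⊆ U ∩ f ⁻¹' (ray v u)ᶜ := by
  have hG : IsOpen (D \ ray v u) := hU.isOpen_target.sdiff (isClosed_ray v hu)
  have hW : IsPreconnected (U ∩ f ⁻¹' (D \ ray v u)) := hU.isPreconnected_inter_preimage hG
    sdiff_subset (isPreconnected_diff_ray hU.isOpen_target hD hv hu) ⟨hU.mapsTo hU.mem, hx₀⟩
    fun z hz z' hz' ↦ (hU.eq_of_map_eq z hz.1 hz.2).trans (hU.eq_of_map_eq z' hz'.1 hz'.2).symm
  have haW : a ∈ U ∩ f ⁻¹' (D \ ray v u) := ⟨ha, hU.mapsTo ha, hfa⟩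
  obtain ⟨c, hc⟩ := ((hU.isOpen_inter_preimage hG).isConnected_iff_isPathConnected.1
    ⟨⟨a, haW⟩, hW⟩).joinedIn a haW b ⟨hb, hU.mapsTo hb, hfb⟩
  exact ⟨c, range_subset_iff.2 fun t ↦ ⟨(hc t).1, (hc t).2.2⟩⟩

theorem IsFork.exists_path_avoiding_ray {X F : Type*} [TopologicalSpace X]
    [LocallyPathConnectedSpace X] [AddCommGroup F] [Module ℝ F] [TopologicalSpace F]
    [IsTopologicalAddGroup F] [ContinuousSMul ℝ F] [T2Space F] [LocallyCompactSpace F]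
    (hrank : 1 < Module.rank ℝ F) {f : X → F} {U : Set X} {D : Set F} {x₀ : X} {v w : F} {b : ℝ}
    {s₁ s₂ : ℝ → X} (h : IsFork f U v w b s₁ s₂) (hU : IsNormalNhd f U D x₀) (hD : Convex ℝ D)
    (hstart : s₁ 0 ≠ x₀) : ∃ u, ¬ SameRay ℝ u w ∧
      ∃ c : Path (s₁ b) (s₂ b), range c ⊆ U ∩ f ⁻¹' (ray v u)ᶜ := by
  have hstartU : s₁ 0 ∈ U := h.isLift_left.mapsTo h.zero_mem_Icc
  have hvD : v ∈ D := h.map_start_eq ▸ hU.mapsTo hstartU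
  have hx₀v : f x₀ - v ≠ 0 := fun h₀ ↦
    hstart (hU.eq_of_map_eq _ hstartU (h.map_start_eq.trans (sub_eq_zero.1 h₀).symm))
  obtain ⟨u, huw, hux₀⟩ := exists_not_sameRay_of_one_lt_rank hrank h.direction_ne_zero hx₀v
  have hu : u ≠ 0 := fun hu ↦ huw (hu ▸ SameRay.zero_left w)
  have hb : b ∈ Icc 0 b := ⟨h.length_pos.le, le_rfl⟩
  have hend : v + b • w ∉ ray v u := fun hbu ↦ by
    have hbv : v + b • w = v + (0 : ℝ) • w := by
      rw [zero_smul, add_zero, eq_of_mem_ray_of_mem_ray huw hbu (add_smul_mem_ray v w hb.1)]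
    exact h.length_pos.ne' (h.injective_line hbv)
  exact ⟨u, huw, hU.exists_path_avoiding_ray hD hvD hu hux₀ (h.isLift_left.mapsTo hb)
    (h.isLift_right.mapsTo hb) (by rwa [h.isLift_left.map_eq b hb])
    (by rwa [h.isLift_right.map_eq b hb])⟩

-- The image of `E` would avoid the open ray in direction `u`, but near `f q` it would cover the
-- complement of the ray in direction `w`.
theorem IsOpenDiscreteOn.notMem_closure_of_frontier_over_rays {X F : Type*} [MetricSpace X]
    [ProperSpace X] [NormedAddCommGroup F] [NormedSpace ℝ F] [LocallyCompactSpace F]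
    (hrank : 1 < Module.rank ℝ F) {f : X → F} {Ω E : Set X} {q : X} {u w : F}
    (hf : IsOpenDiscreteOn f Ω) (hE : IsOpen E) (hEcl : IsCompact (closure E)) (hEΩ : closure E ⊆ Ω)
    (hw : w ≠ 0) (huw : ¬ SameRay ℝ u w)
    (hfrontier : ∀ z ∈ frontier E, f z ∈ ray (f q) w ∪ (ray (f q) u)ᶜ)
    (hfrontier_near : ∀ᶠ z in 𝓝 q, z ∈ frontier E → f z ∈ ray (f q) w) : q ∉ closure E := by
  intro hq
  have hu : u ≠ 0 := fun hu ↦ huw (hu ▸ SameRay.zero_left w)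
  have hcompact : IsCompact (f '' closure E) :=
    hEcl.image_of_continuousOn (hf.continuousOn.mono hEΩ)
  have hdisj_frontier : Disjoint (ray (f q) u \ {f q}) (f '' frontier E) := by
    rw [disjoint_right]
    rintro _ ⟨z, hz, rfl⟩ ⟨hzu, hzq⟩
    exact (hfrontier z hz).elim (fun hzw ↦ hzq (eq_of_mem_ray_of_mem_ray huw hzu hzw))
      fun h ↦ h hzu
  have hdisj : Disjoint (ray (f q) u \ {f q}) (f '' E) :=
    disjoint_image_of_disjoint_image_frontier (isPreconnected_ray_diff_singleton _ hu)
      (hf.isOpen_image E (subset_closure.trans hEΩ) hE) hcompact.isClosed hdisj_frontier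
      fun hsub ↦ not_ray_diff_singleton_subset_of_isCompact _ hu hcompact
        (hsub.trans (image_mono subset_closure))
  obtain ⟨y, hyu, hy⟩ := ((frequently_mem_ray_diff_singleton (f q) hu).and_eventually
    (hf.eventually_mem_image_of_frontier_subset_ray hrank (hEΩ hq) hE hq hw hfrontier_near)).exists
  exact disjoint_left.1 hdisj hyu (hy fun hyw ↦ hyu.2 (eq_of_mem_ray_of_mem_ray huw hyu.1 hyw))

theorem IsOpenDiscreteOn.not_isFork {f : ℂ → ℂ} {Ω U D K : Set ℂ} {x₀ v w : ℂ} {b : ℝ}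
    {s₁ s₂ : ℝ → ℂ} (hf : IsOpenDiscreteOn f Ω) (hU : IsNormalNhd f U D x₀) (hD : Convex ℝ D)
    (hUK : U ⊆ K) (hKΩ : K ⊆ Ω) (hK : Bornology.IsBounded K) (hKc : IsConnected Kᶜ)
    (hstart : s₁ 0 ≠ x₀) : ¬ IsFork f U v w b s₁ s₂ := by
  intro h
  have hrank : 1 < Module.rank ℝ ℂ := by simp
  obtain ⟨u, huw, c, hc⟩ := h.exists_path_avoiding_ray hrank hU hD hstart
  have hqc : s₁ 0 ∉ range c := fun hq ↦ (hc hq).2 (h.map_start_eq ▸ self_mem_ray v u)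
  obtain ⟨p, hp, α, β, hαβ, hrange⟩ := h.exists_paths c hqc
  have hsub : range α ∪ range β ⊆ K := by
    rw [hrange]
    exact (union_subset (union_subset h.isLift_left.mapsTo.image_subset
      h.isLift_right.mapsTo.image_subset) (hc.trans inter_subset_left)).trans hUK
  obtain ⟨E, hEK, hE, hEfrontier, hqE⟩ :=
    exists_isOpen_frontier_subset_range_union hp.symm α β hαβ hsub hKc
  have hEcl : closure E ⊆ K := by
    rw [closure_eq_self_union_frontier]
    exact union_subset hEK (hEfrontier.trans hsub)
  rw [hrange] at hEfrontier
  refine hf.notMem_closure_of_frontier_over_rays hrank hE (hK.subset hEK).isCompact_closure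
    (hEcl.trans hKΩ) h.direction_ne_zero huw (fun z hz ↦ ?_) ?_ hqE
  · rw [h.map_start_eq]
    exact (hEfrontier hz).imp h.map_mem_ray fun hzc ↦ (hc hzc).2
  · filter_upwards [(isCompact_range c.continuous).isClosed.isOpen_compl.mem_nhds hqc]
      with z hzc hz
    rw [h.map_start_eq]
    exact h.map_mem_ray ((hEfrontier hz).resolve_right hzc)

/-! ### Lower semicontinuous counting functions -/

theorem exists_eventually_eq_of_lowerSemicontinuous {X : Type*} [TopologicalSpace X] [BaireSpace X]
    [Nonempty X] {N : X → ℕ} (hN : LowerSemicontinuous N) : ∃ x, ∀ᶠ y in 𝓝 x, N y = N x := by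
  obtain ⟨k, hk⟩ := nonempty_interior_of_iUnion_of_closed hN.isClosed_preimage
    (iUnion_eq_univ_iff.2 fun x ↦ ⟨N x, le_refl (N x)⟩)
  have hbdd : BddAbove (N '' interior (N ⁻¹' Iic k)) :=
    ⟨k, forall_mem_image.2 fun x hx ↦ mem_preimage.1 (interior_subset hx)⟩
  obtain ⟨x, hx, hxmax⟩ := Nat.sSup_mem (hk.image N) hbdd
  have hle : ∀ᶠ y in 𝓝 x, N x ≤ N y := by
    rcases hNx : N x with _ | n
    · exact .of_forall fun y ↦ Nat.zero_le _
    · exact hN x n (n.lt_succ_self.trans_eq hNx.symm)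
  refine ⟨x, ?_⟩
  filter_upwards [isOpen_interior.mem_nhds hx, hle] with y hy hle
  exact le_antisymm (hxmax ▸ le_csSup hbdd (mem_image_of_mem N hy)) hle

section LocallyConstant

variable {E : Type*} [NormedAddCommGroup E] [NormedSpace ℝ E] {B : Set E} {N : E → ℕ}

theorem eq_of_mem_openSegment_of_isVisible {O : Set E} (hN : ContinuousOn N O) {x y z : E}
    (hx : x ∈ O) (hvis : IsVisible ℝ Oᶜ x y) (hxy : x ≠ y) (hz : z ∈ openSegment ℝ x y) :
    N z = N x := by
  have hsub : openSegment ℝ x y ⊆ O := fun z hz ↦ by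
    by_contra hzO
    exact hvis hzO (sbtw_iff_mem_image_Ioo_and_ne.2 ⟨openSegment_eq_image_lineMap ℝ x y ▸ hz, hxy⟩)
  have hconn : IsPreconnected (insert x (openSegment ℝ x y)) :=
    (convex_openSegment x y).isPreconnected.subset_closure (subset_insert _ _)
      (insert_subset_iff.2 ⟨by simp [left_mem_segment], subset_closure⟩)
  exact hconn.constant (hN.mono (insert_subset hx hsub)) (mem_insert_of_mem x hz) (mem_insert x _)

-- By Baire's theorem `N` would be constant near some point of the set where it is not locally
-- constant; the segment condition propagates this value to the complement of this set.
theorem eq_of_lowerSemicontinuousOn_of_eq_on_openSegment [LocallyCompactSpace E] (hB : IsOpen B)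
    (hBc : Convex ℝ B) (hN : LowerSemicontinuousOn N B)
    (hend : ∀ a ∈ B, ∀ b ∈ B, a ≠ b → ∀ m, (∀ y ∈ openSegment ℝ a b, N y = m) → N a = m)
    {a b : E} (ha : a ∈ B) (hb : b ∈ B) : N a = N b := by
  let O : Set E := {x | ∀ᶠ y in 𝓝 x, N y = N x}
  have hO : IsOpen O := isOpen_iff_mem_nhds.2 fun x hx ↦ by
    filter_upwards [eventually_eventually_nhds.2 hx, hx] with y hy hyx
    simpa only [O, mem_ofPred_eq, hyx] using hy
  have hNO : ContinuousOn N O := fun x hx ↦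
    (continuousAt_const.congr (EventuallyEq.symm hx)).continuousWithinAt
  suffices hBO : B ⊆ O from hBc.isPreconnected.constant (hNO.mono hBO) ha hb
  by_contra hBO
  have : Nonempty ↑(B \ O) := (nonempty_of_not_subset hBO).to_subtype
  have : LocallyCompactSpace ↑(B \ O) :=
    (hB.isLocallyClosed.inter hO.isClosed_compl.isLocallyClosed).locallyCompactSpace
  obtain ⟨⟨x, hx⟩, hxN⟩ := exists_eventually_eq_of_lowerSemicontinuous
    (lowerSemicontinuous_restrict_iff.2 (hN.mono (sdiff_subset : B \ O ⊆ B)))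
  rw [nhds_subtype, eventually_comap] at hxN
  obtain ⟨r, hr, hball⟩ := Metric.eventually_nhds_iff_ball.1 (hxN.and (hB.eventually_mem hx.1))
  refine hx.2 (mem_of_superset (ball_mem_nhds x hr) fun y hy ↦ ?_)
  obtain ⟨c, hcO, hcseg, hvis⟩ := hO.isClosed_compl.exists_wbtw_isVisible hx.2 y
  have hc : c ∈ ball x r :=
    (convex_ball x r).segment_subset hy (mem_ball_self hr) hcseg.mem_segment
  have hcx : N c = N x := (hball c hc).1 ⟨c, (hball c hc).2, hcO⟩ rfl
  by_cases hyO : y ∈ O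
  · have hyc : y ≠ c := fun h ↦ hcO (h ▸ hyO)
    rw [← hcx]
    refine (hend c (hball c hc).2 y (hball y hy).2 hyc.symm _ fun z hz ↦ ?_).symm
    exact eq_of_mem_openSegment_of_isVisible hNO hyO hvis hyc (openSegment_symm ℝ c y ▸ hz)
  · exact (hball y hy).1 ⟨y, (hball y hy).2, hyO⟩ rfl

end LocallyConstant

/-! ### Coverings -/

section Covering

variable {Z W : Type*} [TopologicalSpace Z] [TopologicalSpace W] {g : Z → W}

theorem eventually_exists_injOn_of_isOpenMap (hg : IsOpenMap g) {w : W} (hw : (g ⁻¹' {w}).Finite)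
    {O : Z → Set Z} (hO : ∀ z, z ∈ O z ∧ IsOpen (O z)) (hdisj : (g ⁻¹' {w}).PairwiseDisjoint O) :
    ∀ᶠ w' in 𝓝 w, ∃ φ : Z → Z, InjOn φ (g ⁻¹' {w}) ∧
      ∀ z ∈ g ⁻¹' {w}, φ z ∈ g ⁻¹' {w'} ∩ O z := by
  have hmem : ∀ z ∈ g ⁻¹' {w}, ∀ᶠ w' in 𝓝 w, w' ∈ g '' O z := fun z hz ↦
    (hg (O z) (hO z).2).mem_nhds ⟨z, (hO z).1, hz⟩
  filter_upwards [(eventually_all_finite hw).2 hmem] with w' hw'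
  choose! φ hφO hφ using hw'
  refine ⟨φ, fun z hz z' hz' h ↦ ?_, fun z hz ↦ ⟨hφ z hz, hφO z hz⟩⟩
  by_contra hne
  exact disjoint_left.1 (hdisj hz hz' hne) (hφO z hz) (h ▸ hφO z' hz')

variable [T2Space Z]

theorem lowerSemicontinuous_ncard_fiber (hg : IsOpenMap g) (hfin : ∀ w, (g ⁻¹' {w}).Finite) :
    LowerSemicontinuous fun w ↦ (g ⁻¹' {w}).ncard := by
  intro w m hm
  obtain ⟨O, hO, hdisj⟩ := (hfin w).t2_separation
  filter_upwards [eventually_exists_injOn_of_isOpenMap hg (hfin w) hO hdisj] with w' ⟨φ, hφ, hφm⟩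
  exact hm.trans_le (ncard_le_ncard_of_injOn φ (fun z hz ↦ (hφm z hz).1) hφ (hfin w'))

variable {m : ℕ}

-- The fibres near `w` have a point near each of the `m` points over `w`, hence only one.
theorem isLocallyInjective_of_ncard_fiber_eq (hcont : Continuous g) (hg : IsOpenMap g)
    (hfin : ∀ w, (g ⁻¹' {w}).Finite) (hm : ∀ w, (g ⁻¹' {w}).ncard = m) : IsLocallyInjective g := by
  intro x
  obtain ⟨O, hO, hdisj⟩ := (hfin (g x)).t2_separation
  obtain ⟨Y, hY, hYopen, hxY⟩ := eventually_nhds_iff.1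
    (eventually_exists_injOn_of_isOpenMap hg (hfin (g x)) hO hdisj)
  refine ⟨O x ∩ g ⁻¹' Y, (hO x).2.inter (hYopen.preimage hcont), ⟨(hO x).1, hxY⟩, ?_⟩
  rintro a ⟨haO, haY⟩ b ⟨hbO, -⟩ hab
  obtain ⟨φ, hφ, hφm⟩ := hY (g a) haY
  have himage : φ '' (g ⁻¹' {g x}) = g ⁻¹' {g a} :=
    eq_of_subset_of_ncard_le (image_subset_iff.2 fun z hz ↦ (hφm z hz).1)
      (by rw [hφ.ncard_image, hm, hm]) (hfin (g a))
  have eq_apply : ∀ c ∈ g ⁻¹' {g a}, c ∈ O x → c = φ x := by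
    rw [← himage]
    rintro _ ⟨z, hz, rfl⟩ hzO
    by_contra hne
    exact disjoint_left.1 (hdisj hz rfl fun h ↦ hne (h ▸ rfl)) (hφm z hz).2 hzO
  exact (eq_apply a rfl haO).trans (eq_apply b hab.symm hbO).symm

theorem isCoveringMap_of_ncard_fiber_eq (hcont : Continuous g) (hg : IsOpenMap g)
    (hclosed : IsClosedMap g) (hfin : ∀ w, (g ⁻¹' {w}).Finite)
    (hm : ∀ w, (g ⁻¹' {w}).ncard = m) : IsCoveringMap g := by
  refine fun w ↦ hclosed.isEvenlyCovered_of_openPartialHomeomorph (hfin w) fun x _ ↦ ?_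
  obtain ⟨A, hA, hxA, hinj⟩ := isLocallyInjective_of_ncard_fiber_eq hcont hg hfin hm x
  have : Nonempty Z := ⟨x⟩
  exact ⟨.ofContinuousOpen (hinj.toPartialEquiv g A) hcont.continuousOn hg hA, hxA, rfl⟩

end Covering

/-! ### Lifting segments -/

theorem isOpenMap_domRestrict {X Y : Type*} [TopologicalSpace X] [TopologicalSpace Y] {f : X → Y}
    {V : Set X} (hV : IsOpen V) (hf : ∀ O ⊆ V, IsOpen O → IsOpen (f '' O)) :
    IsOpenMap (V.domRestrict f) := fun A hA ↦ by
  have himage : V.domRestrict f '' A = f '' (Subtype.val '' A) := (image_image f _ A).symm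
  rw [himage]
  exact hf _ (Subtype.coe_image_subset V A) (hV.isOpenMap_subtype_val A hA)

theorem exists_tendsto_of_tendsto_nhdsSet {X : Type*} [TopologicalSpace X] [T2Space X] {F : Set X}
    (hF : F.Finite) {s : ℝ → X} {a b : ℝ} (hab : a < b) (hs : ContinuousOn s (Ioo a b))
    (hlim : Tendsto s (𝓝[>] a) (𝓝ˢ F)) : ∃ x ∈ F, Tendsto s (𝓝[>] a) (𝓝 x) := by
  obtain ⟨O, hO, hdisj⟩ := hF.t2_separation
  have hOF : ⋃ x ∈ F, O x ∈ 𝓝ˢ F :=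
    bUnion_mem_nhdsSet fun x _ ↦ (hO x).2.mem_nhds (hO x).1
  obtain ⟨c, hac, hc⟩ := (mem_nhdsGT_iff_exists_Ioo_subset' hab).1
    (inter_mem (hlim hOF) (Ioo_mem_nhdsGT hab))
  obtain ⟨t, ht⟩ := nonempty_Ioo.2 (mem_Ioi.1 hac)
  obtain ⟨x, hx, htx⟩ := mem_iUnion₂.1 (hc ht).1
  have hsx : s '' Ioo a c ⊆ O x := by
    refine IsPreconnected.subset_left_of_subset_union (v := ⋃ y ∈ F \ {x}, O y) (hO x).2
      (isOpen_biUnion fun y _ ↦ (hO y).2) ?_ ?_ ⟨s t, mem_image_of_mem s ht, htx⟩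
      (isPreconnected_Ioo.image s (hs.mono fun r hr ↦ (hc hr).2))
    · exact disjoint_iUnion₂_right.2 fun y hy ↦ hdisj hx hy.1 (Ne.symm hy.2)
    · rw [← biUnion_insert, insert_sdiff_singleton, insert_eq_of_mem hx]
      exact image_subset_iff.2 fun r hr ↦ (hc hr).1
  refine ⟨x, hx, tendsto_def.2 fun N hN ↦ ?_⟩
  have hNF : N ∪ (O x)ᶜ ∈ 𝓝ˢ F := by
    refine mem_nhdsSet_iff_forall.2 fun y hy ↦ ?_
    rcases eq_or_ne y x with rfl | hyx
    · exact mem_of_superset hN subset_union_left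
    · exact mem_of_superset ((hO y).2.mem_nhds (hO y).1)
        ((hdisj hy hx hyx).subset_compl_right.trans subset_union_right)
  filter_upwards [hlim hNF, Ioo_mem_nhdsGT hac] with r hr hrI
  exact hr.resolve_right (not_not.2 (hsx (mem_image_of_mem s hrI)))

namespace IsProperOpen

variable {X Y : Type*} [TopologicalSpace X] [TopologicalSpace Y] {f : X → Y} {V : Set X} {D : Set Y}

theorem isClosedMap_restrictPreimage_domRestrict [T2Space Y] [LocallyCompactSpace Y]
    {S : Set Y} (hV : IsProperOpen f V D) (hS : S ⊆ D) :
    IsClosedMap (S.restrictPreimage (V.domRestrict f)) := by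
  refine isClosedMap_iff_comap_nhds_le.2 fun {y} ↦ (hasBasis_nhdsSet _).ge_iff.2 ?_
  rintro A ⟨hA, hfiber⟩
  obtain ⟨A', hA', rfl⟩ :=
    (IsInducing.subtypeVal.comp IsInducing.subtypeVal).isOpen_iff.1 hA
  have hfiber' : V ∩ f ⁻¹' {(y : Y)} ⊆ A' := fun z hz ↦
    hfiber (a := ⟨⟨z, hz.1⟩, mem_of_eq_of_mem (x := f z) hz.2 y.2⟩) (Subtype.ext hz.2)
  refine mem_comap.2 ⟨_, continuous_subtype_val.continuousAt.eventually
    (hV.eventually_fiber_subset (hS y.2) hA' hfiber'), fun z hz ↦ hz ⟨z.1.2, rfl⟩⟩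

variable [T2Space X]

theorem lowerSemicontinuous_ncard_inter_preimage (hV : IsProperOpen f V D)
    (hfin : ∀ y, (V ∩ f ⁻¹' {y}).Finite) :
    LowerSemicontinuous fun y ↦ (V ∩ f ⁻¹' {y}).ncard := by
  have himage (y : Y) : V ∩ f ⁻¹' {y} = Subtype.val '' (V.domRestrict f ⁻¹' {y}) :=
    (Subtype.image_preimage_coe V _).symm
  simp only [himage, ncard_image_of_injective _ Subtype.val_injective] at hfin ⊢
  exact lowerSemicontinuous_ncard_fiber (isOpenMap_domRestrict hV.isOpen_source hV.isOpen_image)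
    fun y ↦ (hfin y).of_finite_image Subtype.val_injective.injOn

variable [T2Space Y] [LocallyCompactSpace Y] {S : Set Y} {m : ℕ}

theorem isCoveringMap_restrictPreimage_domRestrict (hV : IsProperOpen f V D)
    (hfin : ∀ y, (V ∩ f ⁻¹' {y}).Finite) (hS : S ⊆ D)
    (hm : ∀ y ∈ S, (V ∩ f ⁻¹' {y}).ncard = m) :
    IsCoveringMap (S.restrictPreimage (V.domRestrict f)) := by
  have hinj : Function.Injective fun z : V.domRestrict f ⁻¹' S ↦ (z : X) :=
    Subtype.val_injective.comp Subtype.val_injective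
  have himage (y : S) : (fun z : V.domRestrict f ⁻¹' S ↦ (z : X)) ''
      (S.restrictPreimage (V.domRestrict f) ⁻¹' {y}) = V ∩ f ⁻¹' {(y : Y)} := by
    ext z
    constructor
    · rintro ⟨z, hz, rfl⟩
      exact ⟨z.1.2, congrArg Subtype.val hz⟩
    · exact fun hz ↦
        ⟨⟨⟨z, hz.1⟩, mem_of_eq_of_mem (x := f z) hz.2 y.2⟩, Subtype.ext hz.2, rfl⟩
  refine isCoveringMap_of_ncard_fiber_eq (m := m) hV.continuousOn.domRestrict.restrictPreimage
    ((isOpenMap_domRestrict hV.isOpen_source hV.isOpen_image).restrictPreimage S)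
    (hV.isClosedMap_restrictPreimage_domRestrict hS)
    (fun y ↦ .of_finite_image (himage y ▸ hfin y) hinj.injOn) fun y ↦ ?_
  rw [← ncard_image_of_injective _ hinj, himage, hm y y.2]

theorem exists_isLift_pairwise_ne (hV : IsProperOpen f V D) (hfin : ∀ y, (V ∩ f ⁻¹' {y}).Finite)
    {ℓ : ℝ → Y} {I : Set ℝ} (hI : IsOpen I) (hIc : Convex ℝ I) (hℓ : ContinuousOn ℓ I)
    (hℓD : MapsTo ℓ I D) (hm : ∀ t ∈ I, (V ∩ f ⁻¹' {ℓ t}).ncard = m) {t₀ : ℝ} (ht₀ : t₀ ∈ I) :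
    ∃ σ : ↑(V ∩ f ⁻¹' {ℓ t₀}) → ℝ → X, (∀ z, IsLift f V ℓ I (σ z)) ∧
      ∀ t ∈ I, Function.Injective (σ · t) := by
  have hcov := hV.isCoveringMap_restrictPreimage_domRestrict hfin hℓD.image_subset
    (forall_mem_image.2 hm)
  have : ContractibleSpace I := hIc.contractibleSpace ⟨t₀, ht₀⟩
  have : LocallyPathConnectedSpace I := hI.locallyPathConnectedSpace
  let ℓ' : C(I, ℓ '' I) := ⟨(mapsTo_image ℓ I).restrict ℓ I _, hℓ.mapsToRestrict (mapsTo_image ℓ I)⟩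
  have exists_lift (z : ↑(V ∩ f ⁻¹' {ℓ t₀})) : ∃ F : C(I, V.domRestrict f ⁻¹' (ℓ '' I)),
      (F ⟨t₀, ht₀⟩ : X) = z ∧ (ℓ '' I).restrictPreimage (V.domRestrict f) ∘ F = ℓ' := by
    obtain ⟨F, ⟨hF₀, hF⟩, -⟩ := hcov.existsUnique_continuousMap_lifts ℓ' ⟨t₀, ht₀⟩
      ⟨⟨z, z.2.1⟩, t₀, ht₀, z.2.2.symm⟩ (Subtype.ext z.2.2)
    exact ⟨F, by rw [hF₀], hF⟩
  choose F hF₀ hF using exists_lift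
  obtain ⟨σ, hσ⟩ : ∃ σ : ↑(V ∩ f ⁻¹' {ℓ t₀}) → ℝ → X, ∀ z, ∀ t : I, σ z t = F z t :=
    ⟨fun z ↦ Function.extend Subtype.val (fun t ↦ (F z t : X)) fun _ ↦ z,
      fun z ↦ Subtype.val_injective.extend_apply _ _⟩
  refine ⟨σ, fun z ↦ ⟨?_, ?_, ?_⟩, fun t ht z z' h ↦ ?_⟩
  · rw [continuousOn_iff_continuous_domRestrict]
    exact (by fun_prop : Continuous fun t ↦ (F z t : X)).congr fun t ↦ (hσ z t).symm
  · exact fun t ht ↦ hσ z ⟨t, ht⟩ ▸ (F z ⟨t, ht⟩).1.2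
  · exact fun t ht ↦ hσ z ⟨t, ht⟩ ▸ congrArg Subtype.val (congrFun (hF z) ⟨t, ht⟩)
  · simp only [hσ _ ⟨t, ht⟩] at h
    have hFF := hcov.eq_of_comp_eq (F z).continuous (F z').continuous ((hF z).trans (hF z').symm)
      ⟨t, ht⟩ (Subtype.ext (Subtype.ext h))
    exact Subtype.ext (by rw [← hF₀ z, ← hF₀ z', hFF])

theorem exists_isLift_Ico (hV : IsProperOpen f V D) {ℓ : ℝ → Y} {a b : ℝ} {s : ℝ → X} (hab : a < b)
    (hfin : (V ∩ f ⁻¹' {ℓ a}).Finite) (hℓ : ContinuousWithinAt ℓ (Ioi a) a) (hℓD : ℓ a ∈ D)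
    (hs : IsLift f V ℓ (Ioo a b) s) : ∃ s', IsLift f V ℓ (Ico a b) s' ∧ EqOn s' s (Ioo a b) := by
  have hlim : Tendsto s (𝓝[>] a) (𝓝ˢ (V ∩ f ⁻¹' {ℓ a})) := by
    refine (hasBasis_nhdsSet _).tendsto_right_iff.2 fun A ⟨hA, hfiber⟩ ↦ ?_
    filter_upwards [hℓ.eventually (hV.eventually_fiber_subset hℓD hA hfiber), Ioo_mem_nhdsGT hab]
      with t ht hts
    exact ht ⟨hs.mapsTo hts, hs.map_eq t hts⟩
  obtain ⟨x, hx, hsx⟩ := exists_tendsto_of_tendsto_nhdsSet hfin hab hs.continuousOn hlim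
  have hupdate : EqOn (Function.update s a x) s (Ioo a b) :=
    fun t ht ↦ Function.update_of_ne ht.1.ne' x s
  refine ⟨Function.update s a x, ⟨?_, ?_, ?_⟩, hupdate⟩
  · rw [continuousOn_update_iff, Ico_sdiff_left]
    exact ⟨hs.continuousOn, fun _ ↦ hsx.mono_left (nhdsWithin_mono a Ioo_subset_Ioi_self)⟩
  all_goals
    intro t ht
    rcases ht.1.eq_or_lt with rfl | hat
  · simpa using hx.1
  · exact hupdate ⟨hat, ht.2⟩ ▸ hs.mapsTo ⟨hat, ht.2⟩
  · simpa using hx.2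
  · exact hupdate ⟨hat, ht.2⟩ ▸ hs.map_eq t ⟨hat, ht.2⟩

end IsProperOpen

section CountPreimages

variable {X F : Type*} [TopologicalSpace X] [T2Space X] [AddCommGroup F] [Module ℝ F]
  [TopologicalSpace F] [IsTopologicalAddGroup F] [ContinuousSMul ℝ F] [T2Space F]
  [LocallyCompactSpace F] {f : X → F} {V : Set X} {D : Set F} {v w : F} {b : ℝ} {m : ℕ}

-- The lifts of the open segment end at the points over `v`; if there are fewer of these than lifts,
-- then two of the lifts end at the same point.
theorem IsProperOpen.exists_isFork_of_ncard_lt (hV : IsProperOpen f V D)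
    (hfin : ∀ y, (V ∩ f ⁻¹' {y}).Finite) (hw : w ≠ 0) (hb : 0 < b)
    (hD : ∀ t ∈ Ico 0 b, v + t • w ∈ D) (hm : ∀ t ∈ Ioo 0 b, (V ∩ f ⁻¹' {v + t • w}).ncard = m)
    (hlt : (V ∩ f ⁻¹' {v}).ncard < m) : ∃ s₁ s₂, IsFork f V v w (b / 2) s₁ s₂ := by
  have hline : Continuous fun t : ℝ ↦ v + t • w := by fun_prop
  have hmid : b / 2 ∈ Ioo 0 b := ⟨half_pos hb, half_lt_self hb⟩
  obtain ⟨σ, hσ, hσinj⟩ := hV.exists_isLift_pairwise_ne hfin isOpen_Ioo (convex_Ioo 0 b)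
    hline.continuousOn (fun t ht ↦ hD t (Ioo_subset_Ico_self ht)) hm hmid
  choose s hs hsσ using fun z ↦ hV.exists_isLift_Ico hb (hfin _) hline.continuousWithinAt
    (hD 0 ⟨le_rfl, hb⟩) (hσ z)
  have hstart (z) : s z 0 ∈ V ∩ f ⁻¹' {v} :=
    ⟨(hs z).mapsTo ⟨le_rfl, hb⟩, by simpa using (hs z).map_eq 0 ⟨le_rfl, hb⟩⟩
  have := (hfin v).to_subtype
  obtain ⟨z, z', hne, heq⟩ : ∃ z z', z ≠ z' ∧ s z 0 = s z' 0 := by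
    by_contra! hinj
    refine hlt.not_ge ((hm _ hmid).symm.trans_le
      (Nat.card_le_card_of_injective (fun z ↦ ⟨s z 0, hstart z⟩) fun z z' h ↦ ?_))
    exact not_imp_not.1 (hinj z z') (congrArg Subtype.val h)
  have hIcc : Icc 0 (b / 2) ⊆ Ico 0 b := Icc_subset_Ico_right hmid.2
  refine ⟨s z, s z', hw, hmid.1, (hs z).mono hIcc, (hs z').mono hIcc, heq, fun t ht ↦ ?_⟩
  have htI : t ∈ Ioo 0 b := ⟨ht.1, ht.2.trans_lt hmid.2⟩
  rw [hsσ z htI, hsσ z' htI]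
  exact (hσinj t htI).ne hne

theorem IsProperOpen.ncard_eq_of_ncard_eq_on_openSegment (hV : IsProperOpen f V D)
    (hD : Convex ℝ D) (hfin : ∀ y, (V ∩ f ⁻¹' {y}).Finite)
    (hfork : ∀ v w b s₁ s₂, ¬ IsFork f V v w b s₁ s₂) {x y : F} (hx : x ∈ D) (hy : y ∈ D)
    (hxy : x ≠ y) (hm : ∀ z ∈ openSegment ℝ x y, (V ∩ f ⁻¹' {z}).ncard = m) :
    (V ∩ f ⁻¹' {x}).ncard = m := by
  have hline (t) (ht : t ∈ Ioo (0 : ℝ) 1) : (V ∩ f ⁻¹' {x + t • (y - x)}).ncard = m :=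
    hm _ (openSegment_eq_image' ℝ x y ▸ mem_image_of_mem _ ht)
  apply le_antisymm
  · by_contra! hlt
    have htendsto : Tendsto (fun t : ℝ ↦ x + t • (y - x)) (𝓝[>] 0) (𝓝 x) :=
      ((by fun_prop : Continuous fun t : ℝ ↦ x + t • (y - x)).tendsto' 0 x (by simp)).mono_left
        nhdsWithin_le_nhds
    obtain ⟨t, ht, htI⟩ := ((htendsto.eventually
      (hV.lowerSemicontinuous_ncard_inter_preimage hfin x m hlt)).and
        (Ioo_mem_nhdsGT one_pos)).exists
    exact ht.ne (hline t htI).symm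
  · by_contra! hlt
    obtain ⟨s₁, s₂, h⟩ := hV.exists_isFork_of_ncard_lt hfin (sub_ne_zero.2 hxy.symm) one_pos
      (fun t ht ↦ hD.add_smul_sub_mem hx hy ⟨ht.1, ht.2.le⟩) hline hlt
    exact hfork _ _ _ _ _ h

end CountPreimages

/-! ### Local injectivity -/

theorem IsNormalNhd.injOn_of_not_isFork {X F : Type*} [TopologicalSpace X] [T2Space X]
    [NormedAddCommGroup F] [NormedSpace ℝ F] [LocallyCompactSpace F] {f : X → F} {V : Set X}
    {D : Set F} {x : X} (hV : IsNormalNhd f V D x) (hD : Convex ℝ D)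
    (hfin : ∀ y, (V ∩ f ⁻¹' {y}).Finite) (hfork : ∀ v w b s₁ s₂, ¬ IsFork f V v w b s₁ s₂) :
    InjOn f V := by
  have hfiber : V ∩ f ⁻¹' {f x} = {x} :=
    Subset.antisymm (fun z hz ↦ hV.eq_of_map_eq z hz.1 hz.2)
      (singleton_subset_iff.2 ⟨hV.mem, rfl⟩)
  intro z hz z' hz' hzz'
  have hcard : (V ∩ f ⁻¹' {f z}).ncard = 1 := by
    rw [← ncard_singleton x, ← hfiber]
    exact eq_of_lowerSemicontinuousOn_of_eq_on_openSegment hV.isOpen_target hD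
      ((hV.lowerSemicontinuous_ncard_inter_preimage hfin).lowerSemicontinuousOn D)
      (fun a ha b hb hab m ↦ hV.ncard_eq_of_ncard_eq_on_openSegment hD hfin hfork ha hb hab)
      (hV.mapsTo hz) (hV.mapsTo hV.mem)
  exact (ncard_le_one (hfin _)).1 hcard.le z ⟨hz, rfl⟩ z' ⟨hz', hzz'.symm⟩

theorem exists_partialHomeomorph_of_injOn {X Y : Type*} [TopologicalSpace X] [TopologicalSpace Y]
    [Nonempty X] {f : X → Y} {V : Set X} (hV : IsOpen V) (hcont : ContinuousOn f V)
    (hopen : ∀ O ⊆ V, IsOpen O → IsOpen (f '' O)) (hinj : InjOn f V) :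
    ∃ e : PartialHomeomorph X Y, e.source = V ∧ EqOn f e V :=
  ⟨(OpenPartialHomeomorph.ofContinuousOpenRestrict (hinj.toPartialEquiv f V) hcont
    (isOpenMap_domRestrict hV hopen) hV).toPartialHomeomorph, rfl, fun _ _ ↦ rfl⟩

theorem IsOpenDiscreteOn.eventually_exists_injOn {f : ℂ → ℂ} {Ω : Set ℂ} {x : ℂ}
    (hf : IsOpenDiscreteOn f Ω) (hx : x ∈ Ω) :
    ∀ᶠ q in 𝓝[≠] x, ∃ V ⊆ Ω, IsOpen V ∧ q ∈ V ∧ InjOn f V := by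
  obtain ⟨R, r, hR, hU⟩ := hf.exists_isNormalNhd hx univ_mem
  set U := ball x R ∩ f ⁻¹' ball (f x) r
  have hball : ball x R ⊆ Ω := fun z hz ↦ (hR (ball_subset_closedBall hz)).2
  filter_upwards [mem_nhdsWithin_of_mem_nhds (hU.isOpen_source.mem_nhds hU.mem),
    self_mem_nhdsWithin] with q hqU hqx
  obtain ⟨ρ, δ, hρ, hV⟩ := hf.exists_isNormalNhd (hball hqU.1)
    ((hU.isOpen_source.inter isOpen_compl_singleton).mem_nhds ⟨hqU, hqx⟩)
  set V := ball q ρ ∩ f ⁻¹' ball (f q) δ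
  have hVU : V ⊆ (U ∩ {x}ᶜ) ∩ Ω := fun z hz ↦ hρ (ball_subset_closedBall hz.1)
  have hfork (v w b s₁ s₂) (h : IsFork f V v w b s₁ s₂) : False :=
    hf.not_isFork hU (convex_ball _ _) inter_subset_left hball isBounded_ball
      (isConnected_compl_ball (by simp) x R)
      (hVU (h.isLift_left.mapsTo h.zero_mem_Icc)).1.2 (h.mono fun z hz ↦ (hVU hz).1.1)
  have hVΩ : V ⊆ Ω := fun z hz ↦ (hVU hz).2
  exact ⟨V, hVΩ, hV.isOpen_source, hV.mem, hV.injOn_of_not_isFork (convex_ball _ _)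
    (hf.finite_fiber hV.toIsProperOpen hVΩ) hfork⟩

theorem stoilow_branch_set_discrete_general {f : ℂ → ℂ} {Ω : Set ℂ} (hf : IsOpenDiscreteOn f Ω)
    {x : ℂ} (hx : x ∈ Ω) : ∃ V, IsOpen V ∧ x ∈ V ∧ V ∩ branchSet f Ω ⊆ {x} := by
  obtain ⟨V, hV, hxV, hVinj⟩ := mem_nhdsWithin.1 (hf.eventually_exists_injOn hx)
  refine ⟨V, hV, hxV, fun q ⟨hqV, hq⟩ ↦ ?_⟩
  by_contra hqx
  obtain ⟨W, hWΩ, hW, hqW, hWinj⟩ := hVinj ⟨hqV, hqx⟩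
  exact hq.2 ⟨W, hW, hqW, hWΩ, exists_partialHomeomorph_of_injOn hW
    (hf.continuousOn.mono hWΩ) (fun O hO ↦ hf.isOpen_image O (hO.trans hWΩ)) hWinj⟩

end

/-- **Stoïlow's theorem on the branch set.** The branch set of a continuous, open and
discrete map on a planar domain is a discrete subset of the domain. -/
theorem stoilow_branch_set_discrete
    (Ω : Set ℂ) (hΩopen : IsOpen Ω) (hΩconn : IsConnected Ω)
    (f : ℂ → ℂ)
    (hcont : ContinuousOn f Ω)
    (hopen : ∀ U : Set ℂ, U ⊆ Ω → IsOpen U → IsOpen (f '' U))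
    (hdisc : ∀ y : ℂ, ∀ x ∈ Ω ∩ f ⁻¹' {y},
      ∃ V : Set ℂ, IsOpen V ∧ x ∈ V ∧ V ∩ (Ω ∩ f ⁻¹' {y}) = {x}) :
    ∀ x ∈ branchSet f Ω,
      ∃ V : Set ℂ, IsOpen V ∧ x ∈ V ∧ V ∩ branchSet f Ω = {x} := by
  intro x hx
  have hf : IsOpenDiscreteOn f Ω := ⟨hΩopen, hcont, hopen, fun y ↦
    isDiscrete_iff_forall_mem_exists_isOpen.2 fun x hx ↦ (hdisc y x hx).imp fun _ h ↦ ⟨h.1, h.2.2⟩⟩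
  obtain ⟨V, hV, hxV, hVx⟩ := stoilow_branch_set_discrete_general hf hx.1
  exact ⟨V, hV, hxV, hVx.antisymm (Set.singleton_subset_iff.2 ⟨hxV, hx⟩)⟩
end
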